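/- Let G be a finite group and K an ordered G-simplicial complex. Then the equivariant topological complexity of the geometric realization |K| equals the equivariant simplicial complexity of K: TC_G(|K|) = SC_G(K). -/

import Mathlib

/-! ### Module A: equivariant TC / CC / LS for topological G-spaces -/

/-- The zigzag order `0 < 1 > 2 < 3 > ⋯` on natural numbers. -/
def zigzagLE (i j : ℕ) : Prop := i = j ∨ (i % 2 = 0 ∧ (j = i + 1 ∨ i = j + 1))

/-- The combinatorial interval `J m = {0, 1, …, m}`. -/
def J (m : ℕ) : Type := Fin (m + 1)

namespace J

/-- The underlying natural number of a point of `J m`. -/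
def val {m : ℕ} (i : J m) : ℕ := Fin.val i

/-- The initial point `0` of the combinatorial interval. -/
def zero (m : ℕ) : J m := (0 : Fin (m + 1))

/-- The final point `m` of the combinatorial interval. -/
def last (m : ℕ) : J m := Fin.last m

/-- The topology on `J m` whose open sets are the down-closed sets for the zigzag order. -/
instance (m : ℕ) : TopologicalSpace (J m) where
  IsOpen U := ∀ ⦃a⦄, a ∈ U → ∀ ⦃b⦄, zigzagLE (J.val b) (J.val a) → b ∈ U
  isOpen_univ := fun a _ b _ => Set.mem_univ b
  isOpen_inter := fun s t hs ht a ha b hba => ⟨hs ha.1 hba, ht ha.2 hba⟩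
  isOpen_sUnion := fun S hS a ha b hba => by
    obtain ⟨t, htS, hat⟩ := ha
    exact ⟨t, htS, hS t htS hat hba⟩

end J

section Equivariant

variable (G : Type*) [Group G]

/-- A set is `G`-invariant if it is stable under the action of every group element. -/
def GInvariant {α : Type*} [SMul G α] (U : Set α) : Prop :=
  ∀ g : G, ∀ x ∈ U, g • x ∈ U

variable (X : Type*) [TopologicalSpace X] [MulAction G X]

/-- `U ⊆ X × X` admits a continuous equivariant section of the free path fibration
`π : X^I → X × X`, `α ↦ (α 0, α 1)`. -/
def EqNavigable (U : Set (X × X)) : Prop :=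
  ∃ s : U → C(unitInterval, X), Continuous s ∧
    (∀ u : U, s u 0 = (u : X × X).1 ∧ s u 1 = (u : X × X).2) ∧
    (∀ (g : G) (u : U) (h : g • (u : X × X) ∈ U) (t : unitInterval),
      s ⟨g • (u : X × X), h⟩ t = g • s u t)

/-- The equivariant topological complexity: the least `k` such that `X × X` admits a cover by
`k` open invariant sets, each admitting a continuous equivariant section of the free path
fibration; `⊤` if there is no such cover. -/
noncomputable def eqTC : ℕ∞ :=
  sInf {k : ℕ∞ | ∃ n : ℕ, k = n ∧ ∃ U : Fin n → Set (X × X),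
    (∀ i, IsOpen (U i)) ∧ (∀ i, GInvariant G (U i)) ∧ (⋃ i, U i) = Set.univ ∧
    ∀ i, EqNavigable G X (U i)}

/-- `U ⊆ X × X` admits a continuous equivariant section of the combinatorial path fibration
`q_m : X^{J_m} → X × X`, `β ↦ (β 0, β m)`. -/
def EqNavigableJ (m : ℕ) (U : Set (X × X)) : Prop :=
  ∃ s : U → C(J m, X), Continuous s ∧
    (∀ u : U, s u (J.zero m) = (u : X × X).1 ∧ s u (J.last m) = (u : X × X).2) ∧
    (∀ (g : G) (u : U) (h : g • (u : X × X) ∈ U) (t : J m),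
      s ⟨g • (u : X × X), h⟩ t = g • s u t)

/-- The equivariant combinatorial complexity with paths of length `m`: the least `k` such that
`X × X` admits a cover by `k` open invariant sets, each admitting a continuous equivariant
section of the combinatorial path fibration `q_m`; `⊤` if there is no such cover. -/
noncomputable def eqCCm (m : ℕ) : ℕ∞ :=
  sInf {k : ℕ∞ | ∃ n : ℕ, k = n ∧ ∃ U : Fin n → Set (X × X),
    (∀ i, IsOpen (U i)) ∧ (∀ i, GInvariant G (U i)) ∧ (⋃ i, U i) = Set.univ ∧
    ∀ i, EqNavigableJ G X m (U i)}

/-- The equivariant combinatorial complexity: the minimum over all `m ≥ 1` of `eqCCm`. -/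
noncomputable def eqCC : ℕ∞ := ⨅ m : ℕ, eqCCm G X (m + 1)

/-- `U ⊆ X` is `G`-categorical for the orbit of `x₀`: the inclusion of `U` into `X` is
`G`-homotopic to a map taking values in the orbit of `x₀`. -/
def GCategoricalAt (U : Set X) (x₀ : X) : Prop :=
  ∃ F : U × unitInterval → X, Continuous F ∧
    (∀ u : U, F (u, 0) = (u : X)) ∧
    (∀ (g : G) (u : U) (h : g • (u : X) ∈ U) (t : unitInterval),
      F (⟨g • (u : X), h⟩, t) = g • F (u, t)) ∧
    (∀ u : U, F (u, 1) ∈ MulAction.orbit G x₀)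

/-- `U ⊆ X` is `G`-categorical: the inclusion of `U` into `X` is `G`-homotopic to a map taking
values in a single orbit. -/
def GCategorical (U : Set X) : Prop :=
  ∃ x₀ : X, GCategoricalAt G X U x₀

/-- The equivariant Lusternik–Schnirelmann category: the least `k` such that `X` is covered by
`k` open invariant `G`-categorical sets; `⊤` if there is no such cover. -/
noncomputable def eqLS : ℕ∞ :=
  sInf {k : ℕ∞ | ∃ n : ℕ, k = n ∧ ∃ U : Fin n → Set X,
    (∀ i, IsOpen (U i)) ∧ (∀ i, GInvariant G (U i)) ∧ (⋃ i, U i) = Set.univ ∧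
    ∀ i, GCategorical G X (U i)}

end Equivariant
/-! ### Module C: ordered G-simplicial complexes and their geometric realizations -/

/-- An ordered `G`-simplicial complex: a finite abstract simplicial complex whose vertex set
carries a partial order in which every simplex is totally ordered, together with an action of
`G` on the vertices by monotone simplicial maps. -/
structure GOSC (G : Type) [Group G] : Type 1 where
  /-- the vertex set -/
  V : Type
  [fin : Fintype V]
  [dec : DecidableEq V]
  [po : PartialOrder V]
  /-- the set of simplices -/
  faces : Set (Finset V)
  singleton_mem : ∀ v : V, {v} ∈ faces
  nonempty_of_mem : ∀ s ∈ faces, s.Nonempty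
  down_closed : ∀ s ∈ faces, ∀ t ⊆ s, t.Nonempty → t ∈ faces
  face_chain : ∀ s ∈ faces, ∀ x ∈ s, ∀ y ∈ s, x ≤ y ∨ y ≤ x
  /-- the action of `G` on vertices -/
  smul : G → V → V
  smul_one : ∀ v, smul 1 v = v
  smul_mul : ∀ g h v, smul (g * h) v = smul g (smul h v)
  smul_mono : ∀ g : G, ∀ x y : V, x ≤ y → smul g x ≤ smul g y
  smul_faces : ∀ g : G, ∀ s ∈ faces, s.image (smul g) ∈ faces

attribute [instance] GOSC.fin GOSC.dec GOSC.po

namespace GOSC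

variable {G : Type} [Group G]

/-- The underlying set of the geometric realization `|K|`: formal convex combinations of
vertices whose support is a simplex of `K`. -/
def realSet (K : GOSC G) : Set (K.V → ℝ) :=
  {f | (∀ v, 0 ≤ f v) ∧ (∑ v, f v) = 1 ∧ ∃ s ∈ K.faces, ∀ v, f v ≠ 0 → v ∈ s}

/-- The geometric realization `|K|` of an ordered `G`-simplicial complex, topologized as a
subspace of Euclidean space `K.V → ℝ`. -/
def Real (K : GOSC G) : Type := {f : K.V → ℝ // f ∈ K.realSet}

instance (K : GOSC G) : TopologicalSpace K.Real :=
  inferInstanceAs (TopologicalSpace {f : K.V → ℝ // f ∈ K.realSet})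

/-- Each `g : G` acts on `K.V` by an order isomorphism. -/
def permOf (K : GOSC G) (g : G) : Equiv K.V K.V where
  toFun := K.smul g
  invFun := K.smul g⁻¹
  left_inv := fun v => by
    rw [← K.smul_mul, inv_mul_cancel, K.smul_one]
  right_inv := fun v => by
    rw [← K.smul_mul, mul_inv_cancel, K.smul_one]

/-- The action of `G` on the geometric realization, by affine extension:
`(g • f) v = f (g⁻¹ • v)`. -/
instance (K : GOSC G) : SMul G K.Real where
  smul g f := ⟨fun v => f.val (K.smul g⁻¹ v), by
    obtain ⟨hnn, hsum, s, hs, hsupp⟩ := f.prop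
    refine ⟨fun v => hnn _, ?_, s.image (K.smul g), K.smul_faces g s hs, ?_⟩
    · rw [show (∑ v, f.val (K.smul g⁻¹ v)) = ∑ v, f.val (K.permOf g⁻¹ v) from rfl,
        Equiv.sum_comp (K.permOf g⁻¹) f.val]
      exact hsum
    · intro v hv
      have : K.smul g⁻¹ v ∈ s := hsupp _ hv
      refine Finset.mem_image.mpr ⟨K.smul g⁻¹ v, this, ?_⟩
      rw [← K.smul_mul, mul_inv_cancel, K.smul_one]⟩

lemma smul_apply (K : GOSC G) (g : G) (f : K.Real) (v : K.V) :
    (g • f).val v = f.val (K.smul g⁻¹ v) := rfl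

instance (K : GOSC G) : MulAction G K.Real where
  one_smul f := by
    apply Subtype.ext
    funext v
    rw [smul_apply, inv_one, K.smul_one]
  mul_smul g h f := by
    apply Subtype.ext
    funext v
    rw [smul_apply, smul_apply, smul_apply, mul_inv_rev, K.smul_mul]

end GOSC
namespace GOSC

variable {G : Type} [Group G]

/-- The product of two ordered `G`-simplicial complexes: vertices are pairs with the product
order, simplices are the nonempty chains both of whose projections are simplices, and `G`
acts diagonally. -/
noncomputable def prod (K L : GOSC G) : GOSC G :=
  letI : DecidableEq (K.V × L.V) := Classical.decEq _
  { V := K.V × L.V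
    faces := {s | s.Nonempty ∧ (∀ x ∈ s, ∀ y ∈ s, x ≤ y ∨ y ≤ x) ∧
      s.image Prod.fst ∈ K.faces ∧ s.image Prod.snd ∈ L.faces}
    singleton_mem := fun v => ⟨Finset.singleton_nonempty v, by
        intro x hx y hy
        rw [Finset.mem_singleton] at hx hy
        subst hx; subst hy; exact Or.inl le_rfl,
      by rw [Finset.image_singleton]; exact K.singleton_mem v.1,
      by rw [Finset.image_singleton]; exact L.singleton_mem v.2⟩
    nonempty_of_mem := fun s hs => hs.1
    down_closed := fun s hs t hts htne =>
      ⟨htne, fun x hx y hy => hs.2.1 x (hts hx) y (hts hy),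
        K.down_closed _ hs.2.2.1 _ (Finset.image_subset_image hts) (htne.image _),
        L.down_closed _ hs.2.2.2 _ (Finset.image_subset_image hts) (htne.image _)⟩
    face_chain := fun s hs => hs.2.1
    smul := fun g p => (K.smul g p.1, L.smul g p.2)
    smul_one := fun p => by show (K.smul 1 p.1, L.smul 1 p.2) = p; rw [K.smul_one, L.smul_one]
    smul_mul := fun g h p => by
      show (K.smul (g * h) p.1, L.smul (g * h) p.2) = _
      rw [K.smul_mul, L.smul_mul]
    smul_mono := fun g x y hxy => ⟨K.smul_mono g _ _ hxy.1, L.smul_mono g _ _ hxy.2⟩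
    smul_faces := fun g s hs => by
      refine ⟨hs.1.image _, ?_, ?_, ?_⟩
      · intro x hx y hy
        rcases Finset.mem_image.mp hx with ⟨a, ha, rfl⟩
        rcases Finset.mem_image.mp hy with ⟨b, hb, rfl⟩
        rcases hs.2.1 a ha b hb with h | h
        · exact Or.inl ⟨K.smul_mono g _ _ h.1, L.smul_mono g _ _ h.2⟩
        · exact Or.inr ⟨K.smul_mono g _ _ h.1, L.smul_mono g _ _ h.2⟩
      · rw [Finset.image_image,
          show (Prod.fst ∘ fun p : K.V × L.V => (K.smul g p.1, L.smul g p.2)) =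
            K.smul g ∘ Prod.fst from rfl, ← Finset.image_image]
        exact K.smul_faces g _ hs.2.2.1
      · rw [Finset.image_image,
          show (Prod.snd ∘ fun p : K.V × L.V => (K.smul g p.1, L.smul g p.2)) =
            L.smul g ∘ Prod.snd from rfl, ← Finset.image_image]
        exact L.smul_faces g _ hs.2.2.2 }

/-- The barycentric subdivision of an ordered `G`-simplicial complex: vertices are the
simplices of `K` ordered by inclusion, simplices are the nonempty chains of simplices,
with the induced `G`-action. -/
noncomputable def sd (K : GOSC G) : GOSC G :=
  letI : DecidablePred (· ∈ K.faces) := Classical.decPred _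
  letI : DecidableEq {s : Finset K.V // s ∈ K.faces} := Classical.decEq _
  letI : Fintype {s : Finset K.V // s ∈ K.faces} := Subtype.fintype _
  { V := {s : Finset K.V // s ∈ K.faces}
    faces := {σ | σ.Nonempty ∧ ∀ a ∈ σ, ∀ b ∈ σ, a ≤ b ∨ b ≤ a}
    singleton_mem := fun v => ⟨Finset.singleton_nonempty v, by
      intro a ha b hb
      rw [Finset.mem_singleton] at ha hb
      subst ha; subst hb; exact Or.inl le_rfl⟩
    nonempty_of_mem := fun σ hσ => hσ.1
    down_closed := fun σ hσ τ hτσ hτne => ⟨hτne, fun a ha b hb => hσ.2 a (hτσ ha) b (hτσ hb)⟩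
    face_chain := fun σ hσ => hσ.2
    smul := fun g s => ⟨s.val.image (K.smul g), K.smul_faces g s.val s.prop⟩
    smul_one := fun s => by
      apply Subtype.ext
      show s.val.image (K.smul 1) = s.val
      rw [Finset.image_congr (g := id) (fun x _ => K.smul_one x), Finset.image_id]
    smul_mul := fun g h s => by
      apply Subtype.ext
      show s.val.image (K.smul (g * h)) = (s.val.image (K.smul h)).image (K.smul g)
      rw [Finset.image_image]
      exact Finset.image_congr (fun x _ => K.smul_mul g h x)
    smul_mono := fun g s t hst => by
      show s.val.image (K.smul g) ≤ t.val.image (K.smul g)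
      exact Finset.image_subset_image hst
    smul_faces := fun g σ hσ => by
      refine ⟨hσ.1.image _, ?_⟩
      intro a ha b hb
      rcases Finset.mem_image.mp ha with ⟨a', ha', rfl⟩
      rcases Finset.mem_image.mp hb with ⟨b', hb', rfl⟩
      rcases hσ.2 a' ha' b' hb' with h | h
      · exact Or.inl (Finset.image_subset_image h)
      · exact Or.inr (Finset.image_subset_image h) }

/-- Iterated barycentric subdivision of an ordered `G`-simplicial complex. -/
noncomputable def sdIter : ℕ → GOSC G → GOSC G
  | 0, K => K
  | (n + 1), K => (sdIter n K).sd

/-- Every simplex of an ordered simplicial complex has a greatest vertex. -/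
lemma exists_greatest (K : GOSC G) (s : Finset K.V) (hs : s ∈ K.faces) :
    ∃ m ∈ s, ∀ x ∈ s, x ≤ m := by
  obtain ⟨m, hm, hmax⟩ := Finset.exists_maximal (K.nonempty_of_mem s hs)
  refine ⟨m, hm, fun x hx => ?_⟩
  rcases K.face_chain s hs x hx m hm with h | h
  · exact h
  · rcases eq_or_lt_of_le h with e | lt
    · exact le_of_eq e.symm
    · exact hmax hx h

/-- The last-vertex map `τ : sd(K) → K`, the chosen equivariant simplicial approximation of
the identity: it sends a simplex of `K` (a vertex of `sd(K)`) to its greatest vertex. -/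
noncomputable def tau (K : GOSC G) : (sd K).V → K.V := fun s =>
  Classical.choose (K.exists_greatest s.val s.prop)

/-- The iterated last-vertex map `sd^n(M) → M`, the chosen equivariant simplicial
approximation of the identity. -/
noncomputable def tauIter : (n : ℕ) → (M : GOSC G) → (sdIter n M).V → M.V
  | 0, _ => id
  | (n + 1), M => (tauIter n M) ∘ (tau (sdIter n M))

/-- The two vertex maps `π₁, π₂ : M → K` are equivariantly `c`-contiguous on the invariant
subcomplex determined by the down-closed set of simplices `Λ`: there is a chain of `c + 1`
equivariant simplicial maps from `π₁` to `π₂` in which consecutive maps are contiguous. -/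
def ContigOn (M K : GOSC G) (π₁ π₂ : M.V → K.V) (Λ : Set (Finset M.V)) (c : ℕ) : Prop :=
  ∃ φ : Fin (c + 1) → M.V → K.V,
    (∀ s ∈ Λ, ∀ v ∈ s, φ 0 v = π₁ v) ∧
    (∀ s ∈ Λ, ∀ v ∈ s, φ (Fin.last c) v = π₂ v) ∧
    (∀ j, ∀ s ∈ Λ, s.image (φ j) ∈ K.faces) ∧
    (∀ j, ∀ g : G, ∀ s ∈ Λ, ∀ v ∈ s, φ j (M.smul g v) = K.smul g (φ j v)) ∧
    (∀ j : Fin c, ∀ s ∈ Λ, (s.image (φ j.castSucc) ∪ s.image (φ j.succ)) ∈ K.faces)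

/-- `SC_G^{b,c}(K)`: the least `n` such that `sd^b(K × K)` can be covered by `n` invariant
subcomplexes, on each of which the two composites of the iterated (last-vertex) equivariant
approximations of the identity `sd^b(K×K) → K×K` with the two projections `K×K → K` are
equivariantly `c`-contiguous; `⊤` if there is no such cover. -/
noncomputable def SCbc (K : GOSC G) (b c : ℕ) : ℕ∞ :=
  sInf {k : ℕ∞ | ∃ n : ℕ, k = n ∧
    ∃ Λ : Fin n → Set (Finset (sdIter b (K.prod K)).V),
      (∀ i, Λ i ⊆ (sdIter b (K.prod K)).faces) ∧
      (∀ i, ∀ s ∈ Λ i, ∀ t ⊆ s, t.Nonempty → t ∈ Λ i) ∧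
      (∀ i, ∀ g : G, ∀ s ∈ Λ i, s.image ((sdIter b (K.prod K)).smul g) ∈ Λ i) ∧
      ((sdIter b (K.prod K)).faces ⊆ ⋃ i, Λ i) ∧
      ∀ i, ContigOn (sdIter b (K.prod K)) K
        (fun v => (tauIter b (K.prod K) v).1)
        (fun v => (tauIter b (K.prod K) v).2)
        (Λ i) c}

/-- The equivariant simplicial complexity `SC_G(K) = min_{b,c} SC_G^{b,c}(K)`. -/
noncomputable def SCG (K : GOSC G) : ℕ∞ :=
  ⨅ b : ℕ, ⨅ c : ℕ, SCbc K b c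

end GOSC

/-!
For `TC_G ≤ SC_G`, compare `|K| × |K|` with `|sd^{b+1}(K × K)|`. An invariant subcomplex on which
the projections are contiguous has an open star that the last-vertex map carries into it, and a
chain of contiguous equivariant maps becomes, through straight lines inside simplices, an
equivariant homotopy between the two projections, that is, a motion planner.

For `SC_G ≤ TC_G`, place the vertices of a fine subdivision in `|K| × |K|` and sample the motion
planners at finely spaced times. By Lebesgue's number lemma each vertex can be sent to a vertex of
`K` lying in the supports of all nearby values of the motion at two consecutive times, and such
choices are contiguous from one time to the next. The choices can be made equivariantly because
the stabilizer of a point of `|K|` fixes its support pointwise: it acts on a totally ordered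
simplex by monotone maps.
-/

section EquivariantHomotopy

variable (G : Type*) [Group G] {X Y : Type*} [MulAction G X] [MulAction G Y]

/-- Equivariance as a property of plain functions, for maps that also carry other structure. -/
def IsEquivariant (f : Y → X) : Prop :=
  ∀ (g : G) (y : Y), f (g • y) = g • f y

variable [TopologicalSpace X] [TopologicalSpace Y]

/-- Homotopy through equivariant maps. -/
def EquivariantlyHomotopic (p q : C(Y, X)) : Prop :=
  p.HomotopicWith q fun f => IsEquivariant G f

theorem EqNavigable.of_equivariantlyHomotopic {S : SubMulAction G (X × X)}
    (h : EquivariantlyHomotopic G (ContinuousMap.fst.comp ⟨((↑) : S → X × X), by fun_prop⟩)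
      (ContinuousMap.snd.comp ⟨((↑) : S → X × X), by fun_prop⟩)) :
    EqNavigable G X (S : Set (X × X)) := by
  obtain ⟨H⟩ := h
  refine ⟨(H.toContinuousMap.comp .prodSwap).curry, ContinuousMap.continuous _,
    fun u => ⟨H.apply_zero u, H.apply_one u⟩, fun g u _ t => H.prop t g u⟩

end EquivariantHomotopy

section EquivariantChoice

theorem exists_isEquivariant_of_stabilizer_le {G : Type*} [Group G] {α β : Type*} [MulAction G α]
    [MulAction G β] {R : α → β → Prop} (hR : ∀ (g : G) a b, R a b → R (g • a) (g • b))
    (hex : ∀ a, ∃ b, R a b ∧ MulAction.stabilizer G a ≤ MulAction.stabilizer G b) :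
    ∃ φ : α → β, IsEquivariant G φ ∧ ∀ a, R a (φ a) := by
  choose f hf hstab using hex
  let rep (a : α) : α := (Quotient.mk (MulAction.orbitRel G α) a).out
  have hrep_smul (g : G) (a : α) : rep (g • a) = rep a :=
    congrArg Quotient.out MulAction.orbitRel.Quotient.quotient_smul_eq
  have hmem (a : α) : ∃ g : G, g • rep a = a :=
    MulAction.orbitRel_apply.mp (Quotient.exact (Quotient.out_eq _).symm)
  choose γ hγ using hmem
  refine ⟨fun a => γ a • f (rep a), fun g a => ?_, fun a => ?_⟩
  · have h : (g * γ a)⁻¹ * γ (g • a) ∈ MulAction.stabilizer G (rep a) := by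
      rw [MulAction.mem_stabilizer_iff, mul_smul, inv_smul_eq_iff, mul_smul, hγ a]
      exact hrep_smul g a ▸ hγ (g • a)
    have := MulAction.mem_stabilizer_iff.mp (hstab _ h)
    rw [mul_smul, inv_smul_eq_iff, mul_smul] at this
    exact (congrArg (fun b => γ (g • a) • f b) (hrep_smul g a)).trans this
  · simpa only [hγ] using hR (γ a) _ _ (hf (rep a))

end EquivariantChoice

section Average

open scoped BigOperators

variable {ι E : Type*}

theorem expect_mem_of_convex [AddCommGroup E] [Module ℝ E] [Module ℚ≥0 E] {C : Set E}
    (hC : Convex ℝ C) {s : Finset ι} (hs : s.Nonempty) {f : ι → E} (hf : ∀ i ∈ s, f i ∈ C) :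
    𝔼 i ∈ s, f i ∈ C := by
  have hcard : (s.card : ℝ) ≠ 0 := by exact_mod_cast hs.card_ne_zero
  have : 𝔼 i ∈ s, f i = ∑ i ∈ s, (s.card : ℝ)⁻¹ • f i := by
    rw [← Finset.smul_sum, ← Finset.card_smul_expect, ← Nat.cast_smul_eq_nsmul ℝ,
      inv_smul_smul₀ hcard]
  rw [this]
  refine hC.sum_mem (fun _ _ => by positivity) ?_ hf
  rw [Finset.sum_const, nsmul_eq_mul, mul_inv_cancel₀ hcard]

theorem dist_expect_le [SeminormedAddCommGroup E] [NormedSpace ℝ E] [Module ℚ≥0 E]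
    {s : Finset ι} {f : ι → E} {i : ι} {d : ℝ} {N : ℕ} (hi : i ∈ s) (hN : s.card ≤ N + 1)
    (hd : ∀ j ∈ s, dist (f i) (f j) ≤ d) : dist (f i) (𝔼 j ∈ s, f j) ≤ N / (N + 1) * d := by
  classical
  have hcard : (s.card : ℝ) * dist (f i) (𝔼 j ∈ s, f j) ≤ (s.card - 1) * d := calc
    _ = ‖s.card • (f i - 𝔼 j ∈ s, f j)‖ := by
      rw [dist_eq_norm, ← Nat.cast_smul_eq_nsmul ℝ, norm_smul, RCLike.norm_natCast]
    _ = ‖∑ j ∈ s.erase i, (f i - f j)‖ := by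
      rw [smul_sub, Finset.card_smul_expect, ← Finset.sum_const, ← Finset.sum_sub_distrib,
        Finset.sum_erase _ (sub_self _)]
    _ ≤ (s.erase i).card • d := (norm_sum_le _ _).trans <|
      Finset.sum_le_card_nsmul _ _ _ fun j hj =>
        (dist_eq_norm (f i) (f j)).symm.trans_le (hd j (Finset.mem_of_mem_erase hj))
    _ = (s.card - 1) * d := by
      rw [nsmul_eq_mul, Finset.cast_card_erase_of_mem hi]
  have hpos : (1 : ℝ) ≤ s.card := by exact_mod_cast Finset.card_pos.mpr ⟨i, hi⟩
  have hN : (s.card : ℝ) ≤ N + 1 := by exact_mod_cast hN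
  have hd₀ : 0 ≤ d := dist_nonneg.trans (hd i hi)
  rw [div_mul_eq_mul_div, le_div_iff₀ (by positivity)]
  nlinarith

end Average

section Shrinking

theorem isClosed_setOf_ball_subset {X : Type*} [PseudoMetricSpace X] (U : Set X) (δ : ℝ) :
    IsClosed {x | Metric.ball x δ ⊆ U} := by
  have : {x | Metric.ball x δ ⊆ U} = (Metric.thickening δ Uᶜ)ᶜ := by
    ext x
    simp only [Set.mem_ofPred_eq, Set.mem_compl_iff, Metric.mem_thickening_iff, not_exists, not_and,
      Set.subset_def, Metric.mem_ball']
    exact forall_congr' fun y => not_imp_not.symm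
  exact this ▸ Metric.isOpen_thickening.isClosed_compl

theorem GInvariant.setOf_ball_subset {G X : Type*} [Group G] [PseudoMetricSpace X] [MulAction G X]
    [IsIsometricSMul G X] {U : Set X} (hU : GInvariant G U) (δ : ℝ) :
    GInvariant G {x | Metric.ball x δ ⊆ U} := fun g x hx y hy => by
  have : g⁻¹ • y ∈ Metric.ball x δ := by
    rwa [Metric.mem_ball, ← dist_smul g, smul_inv_smul]
  simpa only [smul_inv_smul] using hU g _ (hx this)

theorem exists_closed_invariant_shrinking {G X ι : Type*} [Group G] [PseudoMetricSpace X]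
    [CompactSpace X] [MulAction G X] [IsIsometricSMul G X] {U : ι → Set X}
    (hopen : ∀ i, IsOpen (U i)) (hinv : ∀ i, GInvariant G (U i)) (hcover : ⋃ i, U i = Set.univ) :
    ∃ C : ι → Set X, (∀ i, IsClosed (C i)) ∧ (∀ i, GInvariant G (C i)) ∧ (∀ i, C i ⊆ U i) ∧
      ∃ δ > 0, ∀ x, ∃ i, Metric.ball x δ ⊆ C i := by
  obtain ⟨δ, hδ, hball⟩ := lebesgue_number_lemma_of_metric isCompact_univ hopen hcover.ge
  refine ⟨fun i => {x | Metric.ball x (δ / 2) ⊆ U i}, fun i => isClosed_setOf_ball_subset _ _,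
    fun i => (hinv i).setOf_ball_subset _, fun i x hx => hx (Metric.mem_ball_self (half_pos hδ)),
    δ / 2, half_pos hδ, fun x => (hball x trivial).imp fun i hi y hy => ?_⟩
  refine (Metric.ball_subset_ball' ?_).trans hi
  linarith [Metric.mem_ball.mp hy]

end Shrinking

theorem EqNavigable.exists_motion {G X : Type*} [Group G] [TopologicalSpace X] [MulAction G X]
    {U : Set (X × X)} (h : EqNavigable G X U) (hU : GInvariant G U) :
    ∃ H : (X × X) × unitInterval → X, ContinuousOn H (U ×ˢ Set.univ) ∧
      (∀ z ∈ U, H (z, 0) = z.1) ∧ (∀ z ∈ U, H (z, 1) = z.2) ∧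
      ∀ t, IsEquivariant G fun z => H (z, t) := by
  classical
  obtain ⟨σ, hσ, hends, hequiv⟩ := h
  let H (p : (X × X) × unitInterval) : X := if hp : p.1 ∈ U then σ ⟨p.1, hp⟩ p.2 else p.1.1
  have hH {z : X × X} (hz : z ∈ U) (t : unitInterval) : H (z, t) = σ ⟨z, hz⟩ t := dif_pos hz
  refine ⟨H, ?_, fun z hz => (hH hz 0).trans (hends ⟨z, hz⟩).1,
    fun z hz => (hH hz 1).trans (hends ⟨z, hz⟩).2, fun t g z => ?_⟩
  · rw [continuousOn_iff_continuous_domRestrict]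
    have : Continuous fun p : ↥(U ×ˢ (Set.univ : Set unitInterval)) => σ ⟨p.1.1, p.2.1⟩ p.1.2 := by
      fun_prop
    exact this.congr fun p => (hH p.2.1 p.1.2).symm
  · by_cases hz : z ∈ U
    · exact (hH (hU g z hz) t).trans ((hequiv g ⟨z, hz⟩ _ t).trans (congrArg _ (hH hz t).symm))
    · have hgz : g • z ∉ U := fun hgz => hz (by simpa only [inv_smul_smul] using hU g⁻¹ _ hgz)
      exact (dif_neg hgz).trans (congrArg (g • ·) (dif_neg hz : H (z, t) = z.1).symm)

theorem exists_unitInterval_partition {ε : ℝ} (hε : 0 < ε) :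
    ∃ (c : ℕ) (t : Fin (c + 1) → unitInterval), t 0 = 0 ∧ t (Fin.last c) = 1 ∧
      ∀ k : Fin c, dist (t k.succ) (t k.castSucc) < ε := by
  obtain ⟨m, hm⟩ := exists_nat_one_div_lt hε
  have hpos : (0 : ℝ) < m + 1 := by positivity
  have hmem (k : Fin (m + 1 + 1)) : (k / (m + 1) : ℝ) ∈ unitInterval :=
    ⟨by positivity, (div_le_one hpos).mpr (by exact_mod_cast k.is_le)⟩
  refine ⟨m + 1, fun k => ⟨k / (m + 1), hmem k⟩, ?_, ?_, fun k => ?_⟩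
  · simp
  · simp [div_self hpos.ne']
  · rw [Subtype.dist_eq, Real.dist_eq, ← sub_div]
    simpa [abs_of_pos hpos] using hm

namespace GOSC

open scoped Pointwise Topology BigOperators

variable {G : Type} [Group G] {K L M : GOSC G}

/-! ### Actions and realizations -/

section Action

instance (K : GOSC G) : MulAction G K.V where
  smul := K.smul
  one_smul := K.smul_one
  mul_smul := K.smul_mul

instance (K : GOSC G) : CovariantClass G K.V HSMul.hSMul LE.le := ⟨K.smul_mono⟩

theorem smul_mem_faces (g : G) {s : Finset K.V} (hs : s ∈ K.faces) : g • s ∈ K.faces :=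
  K.smul_faces g s hs

theorem smul_le_smul_iff (g : G) {v w : K.V} : g • v ≤ g • w ↔ v ≤ w :=
  ⟨fun h => by simpa only [inv_smul_smul] using smul_mono_right g⁻¹ h, fun h => smul_mono_right g h⟩

theorem smul_lt_smul_iff (g : G) {v w : K.V} : g • v < g • w ↔ v < w :=
  lt_iff_lt_of_le_iff_le' (smul_le_smul_iff g) (smul_le_smul_iff g)

theorem smul_eq_of_le_smul {g : G} {v : K.V} (h : v ≤ g • v) : g • v = v := by
  refine le_antisymm ?_ h
  let σ := MulAction.toPermHom G K.V g
  have hσ : g ^ orderOf σ • v = v :=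
    DFunLike.congr_fun ((map_pow (MulAction.toPermHom G K.V) g _).trans (pow_orderOf_eq_one σ)) v
  calc g • v ≤ g • g ^ (orderOf σ - 1) • v := smul_mono_right g (le_pow_smul h _)
    _ = v := by rw [← mul_smul, ← pow_succ', Nat.sub_add_cancel (orderOf_pos σ), hσ]

/-- The simplex of `K` of which `s` is the barycenter. -/
def carrier (s : (sd K).V) : Finset K.V := s.val

theorem carrier_mem_faces (s : (sd K).V) : carrier s ∈ K.faces := s.prop

theorem carrier_injective : Function.Injective (carrier (K := K)) := Subtype.val_injective

theorem carrier_smul (g : G) (s : (sd K).V) : carrier (g • s) = g • carrier s := rfl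

theorem tau_mem (s : (sd K).V) : K.tau s ∈ carrier s :=
  (Classical.choose_spec (K.exists_greatest s.val s.prop)).1

theorem le_tau {s : (sd K).V} {v : K.V} (hv : v ∈ carrier s) : v ≤ K.tau s :=
  (Classical.choose_spec (K.exists_greatest s.val s.prop)).2 v hv

theorem tau_smul (g : G) (s : (sd K).V) : K.tau (g • s) = g • K.tau s := by
  refine le_antisymm ?_ (le_tau (carrier_smul g s ▸ Finset.smul_mem_smul_finset (tau_mem s)))
  obtain ⟨v, hv, h⟩ := Finset.mem_smul_finset.mp (carrier_smul g s ▸ tau_mem (g • s))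
  exact h ▸ smul_mono_right g (le_tau hv)

theorem tauIter_smul (n : ℕ) (g : G) (v : (sdIter n K).V) :
    tauIter n K (g • v) = g • tauIter n K v := by
  induction n with
  | zero => rfl
  | succ n ih => exact (congrArg (tauIter n K) (tau_smul g v)).trans (ih _)

end Action

section Realization

namespace Real

noncomputable instance (K : GOSC G) : MetricSpace K.Real :=
  inferInstanceAs (MetricSpace K.realSet)

instance : FunLike K.Real K.V ℝ where
  coe := Subtype.val
  coe_injective := Subtype.val_injective

/-- The point of `|K|` with the given barycentric coordinates. -/
def mk (w : K.V → ℝ) (hw : w ∈ K.realSet) : K.Real := ⟨w, hw⟩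

theorem coe_mk (w : K.V → ℝ) (hw : w ∈ K.realSet) : ⇑(mk w hw) = w := rfl

theorem dist_coe (x y : K.Real) : dist (⇑x) ⇑y = dist x y := rfl

theorem coe_mem_realSet (x : K.Real) : ⇑x ∈ K.realSet := x.prop

theorem coe_mem_stdSimplex (x : K.Real) : ⇑x ∈ stdSimplex ℝ K.V :=
  ⟨x.coe_mem_realSet.1, x.coe_mem_realSet.2.1⟩

theorem apply_nonneg (x : K.Real) (v : K.V) : 0 ≤ x v := x.coe_mem_realSet.1 v

theorem sum_apply (x : K.Real) : ∑ v, x v = 1 := x.coe_mem_realSet.2.1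

theorem continuous_coe : Continuous fun x : K.Real => ⇑x := continuous_subtype_val

theorem continuous_apply (v : K.V) : Continuous fun x : K.Real => x v :=
  (_root_.continuous_apply v).comp continuous_coe

theorem continuous_mk {Y : Type*} [TopologicalSpace Y] {w : Y → K.V → ℝ} (hw : Continuous w)
    (h : ∀ y, w y ∈ K.realSet) : Continuous fun y => mk (w y) (h y) :=
  hw.subtype_mk h

/-- The support of a point of `|K|`, i.e. the unique simplex containing it in its relative
interior. -/
noncomputable def supp (x : K.Real) : Finset K.V := {v | x v ≠ 0}

theorem mem_supp {x : K.Real} {v : K.V} : v ∈ x.supp ↔ x v ≠ 0 := by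
  simp [supp]

theorem notMem_supp {x : K.Real} {v : K.V} : v ∉ x.supp ↔ x v = 0 := by
  rw [mem_supp, not_not]

theorem apply_pos {x : K.Real} {v : K.V} (hv : v ∈ x.supp) : 0 < x v :=
  (x.apply_nonneg v).lt_of_ne' (mem_supp.mp hv)

theorem supp_nonempty (x : K.Real) : x.supp.Nonempty := by
  obtain ⟨v, -, hv⟩ := Finset.exists_ne_zero_of_sum_ne_zero (x.sum_apply.trans_ne one_ne_zero)
  exact ⟨v, mem_supp.mpr hv⟩

theorem supp_mem_faces (x : K.Real) : x.supp ∈ K.faces :=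
  let ⟨s, hs, hxs⟩ := x.coe_mem_realSet.2.2
  K.down_closed s hs _ (fun v hv => hxs v (mem_supp.mp hv)) x.supp_nonempty

theorem smul_apply_smul (g : G) (x : K.Real) (v : K.V) : (g • x) (g • v) = x v :=
  congrArg x (inv_smul_smul g v)

theorem eq_smul_of_apply_smul {x y : K.Real} {g : G} (h : ∀ v, y (g • v) = x v) : y = g • x :=
  DFunLike.ext _ _ fun v => by rw [← smul_inv_smul g v, h, smul_apply_smul]

theorem mem_supp_smul (g : G) {x : K.Real} {v : K.V} : g • v ∈ (g • x).supp ↔ v ∈ x.supp := by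
  rw [mem_supp, mem_supp, smul_apply_smul]

theorem isOpen_mem_supp (v : K.V) : IsOpen {x : K.Real | v ∈ x.supp} := by
  simpa only [mem_supp] using isOpen_ne_fun (continuous_apply v) continuous_const

end Real

/-- Unnormalised barycentric coordinates of a point of `|K|`. -/
structure IsWeight (K : GOSC G) (w : K.V → ℝ) : Prop where
  nonneg : ∀ v, 0 ≤ w v
  exists_ne_zero : ∃ v, w v ≠ 0
  mem_faces : ∀ s : Finset K.V, s.Nonempty → (∀ v ∈ s, w v ≠ 0) → s ∈ K.faces

namespace IsWeight

theorem sum_pos {w : K.V → ℝ} (hw : K.IsWeight w) : 0 < ∑ v, w v := by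
  obtain ⟨v, hv⟩ := hw.exists_ne_zero
  exact Finset.sum_pos' (fun v _ => hw.nonneg v)
    ⟨v, Finset.mem_univ v, (hw.nonneg v).lt_of_ne' hv⟩

/-- The point of `|K|` with barycentric coordinates proportional to `w`. -/
noncomputable def normalize {w : K.V → ℝ} (hw : K.IsWeight w) : K.Real :=
  Real.mk (fun v => w v / ∑ u, w u) ⟨fun v => div_nonneg (hw.nonneg v) hw.sum_pos.le,
    by rw [← Finset.sum_div, div_self hw.sum_pos.ne'], ({v | w v ≠ 0} : Finset K.V),
    hw.mem_faces _ (hw.exists_ne_zero.imp fun v hv => by simpa using hv) fun v hv => by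
      simpa using hv,
    fun v hv => by simpa using (div_ne_zero_iff.mp hv).1⟩

theorem mem_supp_normalize {w : K.V → ℝ} (hw : K.IsWeight w) {v : K.V} :
    v ∈ hw.normalize.supp ↔ w v ≠ 0 := by
  rw [Real.mem_supp]
  exact div_ne_zero_iff.trans (and_iff_left hw.sum_pos.ne')

theorem continuous_normalize {Y : Type*} [TopologicalSpace Y] {w : Y → K.V → ℝ}
    (hw : ∀ y, K.IsWeight (w y)) (hc : ∀ v, Continuous fun y => w y v) :
    Continuous fun y => (hw y).normalize :=
  Real.continuous_mk (continuous_pi fun v =>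
    (hc v).div (continuous_finsetSum _ fun u _ => hc u) fun y => (hw y).sum_pos.ne') _

theorem normalize_eq_smul {w w' : K.V → ℝ} (hw : K.IsWeight w) (hw' : K.IsWeight w') {g : G}
    (h : ∀ v, w' (g • v) = w v) : hw'.normalize = g • hw.normalize := by
  have hsum : ∑ v, w' v = ∑ v, w v := by
    simp only [← h]
    exact (Equiv.sum_comp (MulAction.toPerm g) w').symm
  exact Real.eq_smul_of_apply_smul fun v => congrArg₂ (· / ·) (h v) hsum

end IsWeight

/-- The closed geometric simplex spanned by the vertices in `s`. -/
def simplexOn {V : Type*} [Fintype V] (s : Finset V) : Set (V → ℝ) :=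
  {f ∈ stdSimplex ℝ V | ∀ v ∉ s, f v = 0}

theorem convex_simplexOn {V : Type*} [Fintype V] (s : Finset V) : Convex ℝ (simplexOn s) := by
  rintro f ⟨hf, hfs⟩ f' ⟨hf', hfs'⟩ a b ha hb hab
  refine ⟨convex_stdSimplex ℝ V hf hf' ha hb hab, fun v hv => ?_⟩
  simp [hfs v hv, hfs' v hv]

theorem isClosed_simplexOn {V : Type*} [Fintype V] (s : Finset V) : IsClosed (simplexOn s) := by
  simp only [simplexOn, Set.ofPred_and, Set.ofPred_forall]
  exact (isClosed_stdSimplex ℝ V).inter <| isClosed_iInter fun v => isClosed_iInter fun _ =>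
    isClosed_eq (continuous_apply v) continuous_const

theorem realSet_eq_iUnion (K : GOSC G) : K.realSet = ⋃ s ∈ K.faces, simplexOn s := by
  ext f
  simp only [realSet, simplexOn, stdSimplex, Set.mem_iUnion, Set.mem_ofPred_eq, exists_prop,
    not_imp_comm, ne_eq]
  tauto

theorem simplexOn_subset_realSet {s : Finset K.V} (hs : s ∈ K.faces) :
    simplexOn s ⊆ K.realSet :=
  K.realSet_eq_iUnion ▸ Set.subset_biUnion_of_mem (u := simplexOn) hs

theorem Real.coe_mem_simplexOn {x : K.Real} {s : Finset K.V} (h : x.supp ⊆ s) :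
    ⇑x ∈ simplexOn s :=
  ⟨x.coe_mem_stdSimplex, fun _ hv => notMem_supp.mp fun hx => hv (h hx)⟩

instance (K : GOSC G) : CompactSpace K.Real := by
  refine isCompact_iff_compactSpace.mp (?_ : IsCompact K.realSet)
  rw [realSet_eq_iUnion]
  exact K.faces.toFinite.isCompact_biUnion fun s _ =>
    (isCompact_stdSimplex ℝ K.V).of_isClosed_subset (isClosed_simplexOn s) fun _ hf => hf.1

instance (K : GOSC G) : IsIsometricSMul G K.Real :=
  ⟨fun g => Isometry.of_dist_eq fun x y =>
    (IsometryEquiv.piCongrLeft' (Y := fun _ => ℝ) (MulAction.toPerm g)).isometry.dist_eq ⇑x ⇑y⟩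

namespace Real

/-- The image of `x` under the affine extension of `f : K.V → L.V`, which need only be
simplicial on the support of `x`. -/
noncomputable def map (f : K.V → L.V) (x : K.Real) (h : x.supp.image f ∈ L.faces) : L.Real :=
  mk (FunOnFinite.linearMap ℝ ℝ f x) <| simplexOn_subset_realSet h
    ⟨stdSimplex.image_linearMap f ⟨x, x.coe_mem_stdSimplex, rfl⟩, fun w hw => by
      rw [FunOnFinite.linearMap_apply_apply]
      refine Finset.sum_eq_zero fun v hv => notMem_supp.mp fun hx => hw ?_
      exact Finset.mem_image.mpr ⟨v, hx, (Finset.mem_filter.mp hv).2⟩⟩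

theorem map_apply (f : K.V → L.V) (x : K.Real) (h : x.supp.image f ∈ L.faces) (w : L.V) :
    x.map f h w = ∑ v with f v = w, x v :=
  FunOnFinite.linearMap_apply_apply ℝ ℝ f x w

theorem supp_map (f : K.V → L.V) (x : K.Real) (h : x.supp.image f ∈ L.faces) :
    (x.map f h).supp = x.supp.image f := by
  ext w
  rw [mem_supp, map_apply, ne_eq, Finset.sum_eq_zero_iff_of_nonneg fun v _ => x.apply_nonneg v]
  simp [mem_supp, and_comm]

theorem map_eq_smul {f : K.V → L.V} {x y : K.Real} {g : G} (hy : y = g • x)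
    (h : x.supp.image f ∈ L.faces) (h' : y.supp.image f ∈ L.faces)
    (hf : ∀ v ∈ x.supp, f (g • v) = g • f v) : y.map f h' = g • x.map f h := by
  subst hy
  refine eq_smul_of_apply_smul fun w => ?_
  rw [map_apply, map_apply, Finset.sum_filter, Finset.sum_filter,
    ← Equiv.sum_comp (MulAction.toPerm g)]
  refine Finset.sum_congr rfl fun v _ => ?_
  rw [MulAction.toPerm_apply, smul_apply_smul]
  by_cases hv : v ∈ x.supp
  · simp only [hf v hv, smul_left_cancel_iff]
  · simp only [notMem_supp.mp hv, ite_self]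

theorem continuous_map {Y : Type*} [TopologicalSpace Y] {f : K.V → L.V} {r : Y → K.Real}
    (hr : Continuous r) (h : ∀ y, (r y).supp.image f ∈ L.faces) :
    Continuous fun y => (r y).map f (h y) :=
  continuous_mk ((FunOnFinite.continuous_linearMap ℝ ℝ f).comp (continuous_coe.comp hr)) _

end Real

end Realization

/-! ### From contiguity to motion planners -/

section Homotopy

variable {Y : Type*} [TopologicalSpace Y] [MulAction G Y]

theorem equivariantlyHomotopic_of_supp_union_mem_faces {p q : C(Y, K.Real)}
    (hp : IsEquivariant G p) (hq : IsEquivariant G q)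
    (h : ∀ y, (p y).supp ∪ (q y).supp ∈ K.faces) : EquivariantlyHomotopic G p q := by
  have hmem : ∀ z : unitInterval × Y,
      AffineMap.lineMap (⇑(p z.2)) (⇑(q z.2)) (z.1 : ℝ) ∈ K.realSet := fun z =>
    simplexOn_subset_realSet (h z.2) <| (convex_simplexOn _).lineMap_mem
      (Real.coe_mem_simplexOn Finset.subset_union_left)
      (Real.coe_mem_simplexOn Finset.subset_union_right) z.1.2
  refine ⟨⟨⟨⟨fun z => Real.mk _ (hmem z), ?_⟩, ?_, ?_⟩, ?_⟩⟩
  · refine Real.continuous_mk ?_ hmem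
    have := Real.continuous_coe (K := K)
    simp only [AffineMap.lineMap_apply_module]
    fun_prop
  · exact fun y => DFunLike.coe_injective (AffineMap.lineMap_apply_zero _ _)
  · exact fun y => DFunLike.coe_injective (AffineMap.lineMap_apply_one _ _)
  · refine fun t g y => Real.eq_smul_of_apply_smul fun v => ?_
    simp only [ContinuousMap.coe_mk, Real.coe_mk, AffineMap.lineMap_apply_module, Pi.add_apply,
      Pi.smul_apply, hp g y, hq g y, Real.smul_apply_smul]

theorem equivariantlyHomotopic_of_contigOn {π₁ π₂ : L.V → K.V} {Λ : Set (Finset L.V)} {c : ℕ}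
    (hc : ContigOn L K π₁ π₂ Λ c) {r : C(Y, L.Real)} (hr : IsEquivariant G r)
    (hrΛ : ∀ y, (r y).supp ∈ Λ) {p₁ p₂ : C(Y, K.Real)} (hp₁ : IsEquivariant G p₁)
    (hp₂ : IsEquivariant G p₂)
    (h₁ : ∀ y, ∀ v ∈ (r y).supp, π₁ v ∈ (p₁ y).supp)
    (h₂ : ∀ y, ∀ v ∈ (r y).supp, π₂ v ∈ (p₂ y).supp) : EquivariantlyHomotopic G p₁ p₂ := by
  obtain ⟨φ, hφ₁, hφ₂, hface, hsmul, hcontig⟩ := hc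
  let q (j : Fin (c + 1)) : C(Y, K.Real) :=
    ⟨fun y => (r y).map (φ j) (hface j _ (hrΛ y)), Real.continuous_map r.continuous _⟩
  have hsupp (j y) : (q j y).supp = (r y).supp.image (φ j) :=
    Real.supp_map (φ j) (r y) (hface j _ (hrΛ y))
  have hq (j) : IsEquivariant G (q j) := fun g y =>
    Real.map_eq_smul (hr g y) (hface j _ (hrΛ y)) (hface j _ (hrΛ (g • y))) (hsmul j g _ (hrΛ y))
  have hp₁q : EquivariantlyHomotopic G p₁ (q 0) := by
    refine equivariantlyHomotopic_of_supp_union_mem_faces hp₁ (hq 0) fun y => ?_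
    rw [hsupp, Finset.union_eq_left.mpr]
    · exact (p₁ y).supp_mem_faces
    · exact Finset.image_subset_iff.mpr fun v hv => hφ₁ _ (hrΛ y) v hv ▸ h₁ y v hv
  have hqp₂ : EquivariantlyHomotopic G (q (Fin.last c)) p₂ := by
    refine equivariantlyHomotopic_of_supp_union_mem_faces (hq _) hp₂ fun y => ?_
    rw [hsupp, Finset.union_eq_right.mpr]
    · exact (p₂ y).supp_mem_faces
    · exact Finset.image_subset_iff.mpr fun v hv => hφ₂ _ (hrΛ y) v hv ▸ h₂ y v hv
  have hstep (j : Fin c) : EquivariantlyHomotopic G (q j.castSucc) (q j.succ) :=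
    equivariantlyHomotopic_of_supp_union_mem_faces (hq _) (hq _) fun y => by
      rw [hsupp, hsupp]
      exact hcontig j _ (hrΛ y)
  have hchain (j) : EquivariantlyHomotopic G p₁ (q j) :=
    Fin.induction hp₁q (fun j ih => ih.trans (hstep j)) j
  exact (hchain _).trans hqp₂

end Homotopy

section ToSubdivision

/-- Unnormalised barycentric coordinates in `sd L` of a point `x` of `|L|`: the coordinate of a
simplex is nonzero exactly when its vertices are those at which `x` exceeds some threshold. -/
noncomputable def sdWeight (x : L.Real) (σ : (sd L).V) : ℝ :=
  (∏ v ∈ carrier σ, x v) * ∏ v ∈ carrier σ, ∏ w ∈ (carrier σ)ᶜ, max (x v - x w) 0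

theorem sdWeight_ne_zero_iff {x : L.Real} {σ : (sd L).V} :
    sdWeight x σ ≠ 0 ↔
      carrier σ ⊆ x.supp ∧ ∀ v ∈ carrier σ, ∀ w ∉ carrier σ, x w < x v := by
  simp only [sdWeight, mul_ne_zero_iff, Finset.prod_ne_zero_iff, Finset.mem_compl, ne_eq,
    max_eq_right_iff, sub_nonpos, not_le, Finset.subset_iff, Real.mem_supp]

theorem sdWeight_smul (g : G) (x : L.Real) (σ : (sd L).V) :
    sdWeight (g • x) (g • σ) = sdWeight x σ := by
  have hcompl : (g • carrier σ)ᶜ = g • (carrier σ)ᶜ := by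
    ext v
    simp only [Finset.mem_compl, ← Finset.inv_smul_mem_iff (a := g)]
  rw [sdWeight, sdWeight, carrier_smul, hcompl]
  simp only [Finset.smul_finset_def, Finset.prod_image (MulAction.injective g).injOn,
    Real.smul_apply_smul]

theorem isWeight_sdWeight (x : L.Real) : (sd L).IsWeight (sdWeight x) where
  nonneg σ := mul_nonneg (Finset.prod_nonneg fun v _ => x.apply_nonneg v)
    (Finset.prod_nonneg fun _ _ => Finset.prod_nonneg fun _ _ => le_max_right _ _)
  exists_ne_zero := ⟨⟨x.supp, x.supp_mem_faces⟩, sdWeight_ne_zero_iff.mpr ⟨subset_rfl,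
    fun _ hv _ hw => (Real.notMem_supp.mp hw).trans_lt (Real.apply_pos hv)⟩⟩
  mem_faces s hs hne := by
    refine ⟨hs, fun σ hσ τ hτ => ?_⟩
    obtain ⟨-, hσ⟩ := sdWeight_ne_zero_iff.mp (hne σ hσ)
    obtain ⟨-, hτ⟩ := sdWeight_ne_zero_iff.mp (hne τ hτ)
    by_contra! h
    obtain ⟨v, hvσ, hvτ⟩ := Finset.not_subset.mp h.1
    obtain ⟨w, hwτ, hwσ⟩ := Finset.not_subset.mp h.2
    exact lt_asymm (hσ v hvσ w hwσ) (hτ w hwτ v hvτ)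

/-- A map `|L| → |sd L|` with the same supports as the barycentric homeomorphism but with manifestly
continuous coordinates. -/
noncomputable def toSd (L : GOSC G) : C(L.Real, (sd L).Real) where
  toFun x := (isWeight_sdWeight x).normalize
  continuous_toFun := by
    refine IsWeight.continuous_normalize isWeight_sdWeight fun σ => ?_
    have h := Real.continuous_apply (K := L)
    exact (continuous_finsetProd _ fun v _ => h v).mul <| continuous_finsetProd _ fun v _ =>
      continuous_finsetProd _ fun w _ => ((h v).sub (h w)).max continuous_const

theorem isEquivariant_toSd : IsEquivariant G (toSd L) := fun g x =>
  IsWeight.normalize_eq_smul (isWeight_sdWeight x) (isWeight_sdWeight _) (sdWeight_smul g x)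

theorem carrier_subset_supp_of_mem_supp_toSd {x : L.Real} {σ : (sd L).V}
    (hσ : σ ∈ (toSd L x).supp) : carrier σ ⊆ x.supp :=
  (sdWeight_ne_zero_iff.mp ((isWeight_sdWeight x).mem_supp_normalize.mp hσ)).1

/-- The comparison map `|L| → |sd^n L|`. -/
noncomputable def toSdIter : (n : ℕ) → (L : GOSC G) → C(L.Real, (sdIter n L).Real)
  | 0, L => .id L.Real
  | n + 1, L => (toSd (sdIter n L)).comp (toSdIter n L)

theorem isEquivariant_toSdIter (n : ℕ) : IsEquivariant G (toSdIter n L) := by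
  induction n with
  | zero => exact fun _ _ => rfl
  | succ n ih => exact fun g x => (congrArg _ (ih g x)).trans (isEquivariant_toSd g _)

theorem tauIter_mem_supp_of_mem_supp_toSdIter (n : ℕ) {x : L.Real} {v : (sdIter n L).V}
    (hv : v ∈ (toSdIter n L x).supp) : tauIter n L v ∈ x.supp := by
  induction n with
  | zero => exact hv
  | succ n ih => exact ih (carrier_subset_supp_of_mem_supp_toSd hv (tau_mem v))

end ToSubdivision

section ToProduct

open Classical in
/-- The total mass a point of `|K|` gives to the vertices below `v`. Along the support of `x`, the
intervals `[lowerMass x v, lowerMass x v + x v]` subdivide the unit interval. -/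
noncomputable def lowerMass (x : K.Real) (v : K.V) : ℝ := ∑ u with u < v, x u

open Classical in
theorem lowerMass_add_apply (x : K.Real) (v : K.V) :
    lowerMass x v + x v = ∑ u with u ≤ v, x u := by
  have : ({u | u ≤ v} : Finset K.V) = insert v ({u | u < v} : Finset K.V) := by
    ext u
    simp [le_iff_eq_or_lt]
  rw [this, Finset.sum_insert (by simp), add_comm, lowerMass]

theorem lowerMass_smul (g : G) (x : K.Real) (v : K.V) :
    lowerMass (g • x) (g • v) = lowerMass x v := by
  classical
  rw [lowerMass, lowerMass, Finset.sum_filter, Finset.sum_filter,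
    ← Equiv.sum_comp (MulAction.toPerm g)]
  simp only [MulAction.toPerm_apply, smul_lt_smul_iff, Real.smul_apply_smul]

theorem continuous_lowerMass (v : K.V) : Continuous fun x : K.Real => lowerMass x v :=
  continuous_finsetSum _ fun u _ => Real.continuous_apply u

theorem lowerMass_add_apply_le_of_lt (x : K.Real) {v w : K.V} (h : v < w) :
    lowerMass x v + x v ≤ lowerMass x w := by
  classical
  rw [lowerMass_add_apply]
  exact Finset.sum_le_sum_of_subset_of_nonneg
    (Finset.monotone_filter_right _ fun u _ hu => hu.trans_lt h) fun u _ _ => x.apply_nonneg u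

theorem exists_mem_supp_lowerMass_add_apply_eq_one (x : K.Real) :
    ∃ v ∈ x.supp, lowerMass x v + x v = 1 := by
  classical
  obtain ⟨v, hv, hmax⟩ := K.exists_greatest x.supp x.supp_mem_faces
  refine ⟨v, hv, ?_⟩
  rw [lowerMass_add_apply, ← x.sum_apply]
  refine Finset.sum_subset (Finset.filter_subset _ _) fun u _ hu =>
    Real.notMem_supp.mp fun hx => ?_
  exact hu (Finset.mem_filter.mpr ⟨Finset.mem_univ u, hmax u hx⟩)

/-- Unnormalised barycentric coordinates in `K.prod L` of a pair of points: the coordinate of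
`(v, w)` is the length of the overlap of the subintervals assigned to `v` and `w`. -/
noncomputable def prodWeight (z : K.Real × L.Real) (p : (K.prod L).V) : ℝ :=
  max (min (lowerMass z.1 p.1 + z.1 p.1) (lowerMass z.2 p.2 + z.2 p.2) -
    max (lowerMass z.1 p.1) (lowerMass z.2 p.2)) 0

theorem prodWeight_ne_zero_iff {z : K.Real × L.Real} {p : (K.prod L).V} :
    prodWeight z p ≠ 0 ↔ (p.1 ∈ z.1.supp ∧ p.2 ∈ z.2.supp) ∧
      lowerMass z.1 p.1 < lowerMass z.2 p.2 + z.2 p.2 ∧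
      lowerMass z.2 p.2 < lowerMass z.1 p.1 + z.1 p.1 := by
  simp only [prodWeight, ne_eq, max_eq_right_iff, sub_nonpos, not_le, max_lt_iff, lt_min_iff,
    lt_add_iff_pos_right, Real.mem_supp, (z.1.apply_nonneg _).lt_iff_ne',
    (z.2.apply_nonneg _).lt_iff_ne']
  tauto

theorem prodWeight_smul (g : G) (z : K.Real × L.Real) (p : (K.prod L).V) :
    prodWeight (g • z) (g • p) = prodWeight z p := by
  have h₁ := lowerMass_smul g z.1 p.1
  have h₂ := lowerMass_smul g z.2 p.2
  have h₃ := Real.smul_apply_smul g z.1 p.1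
  have h₄ := Real.smul_apply_smul g z.2 p.2
  change max (min (lowerMass (g • z.1) (g • p.1) + (g • z.1) (g • p.1))
    (lowerMass (g • z.2) (g • p.2) + (g • z.2) (g • p.2)) -
    max (lowerMass (g • z.1) (g • p.1)) (lowerMass (g • z.2) (g • p.2))) 0 = _
  rw [h₁, h₂, h₃, h₄, prodWeight]

theorem snd_le_snd_of_prodWeight_ne_zero {z : K.Real × L.Real} {p q : (K.prod L).V}
    (hp : prodWeight z p ≠ 0) (hq : prodWeight z q ≠ 0) (h : p.1 < q.1) : p.2 ≤ q.2 := by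
  obtain ⟨⟨-, hp₂⟩, -, hp⟩ := prodWeight_ne_zero_iff.mp hp
  obtain ⟨⟨-, hq₂⟩, hq, -⟩ := prodWeight_ne_zero_iff.mp hq
  refine (L.face_chain _ z.2.supp_mem_faces _ hp₂ _ hq₂).elim id fun hle => ?_
  by_contra hne
  refine lt_irrefl (lowerMass z.2 p.2) ?_
  calc lowerMass z.2 p.2 < lowerMass z.1 p.1 + z.1 p.1 := hp
    _ ≤ lowerMass z.1 q.1 := lowerMass_add_apply_le_of_lt _ h
    _ < lowerMass z.2 q.2 + z.2 q.2 := hq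
    _ ≤ lowerMass z.2 p.2 := lowerMass_add_apply_le_of_lt _ (hle.lt_of_not_ge hne)

theorem le_total_of_prodWeight_ne_zero {z : K.Real × L.Real} {p q : (K.prod L).V}
    (hp : prodWeight z p ≠ 0) (hq : prodWeight z q ≠ 0) : p ≤ q ∨ q ≤ p := by
  obtain ⟨⟨hp₁, hp₂⟩, -⟩ := prodWeight_ne_zero_iff.mp hp
  obtain ⟨⟨hq₁, hq₂⟩, -⟩ := prodWeight_ne_zero_iff.mp hq
  rcases eq_or_ne p.1 q.1 with h | h
  · exact (L.face_chain _ z.2.supp_mem_faces _ hp₂ _ hq₂).imp (⟨h.le, ·⟩) (⟨h.ge, ·⟩)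
  · exact (K.face_chain _ z.1.supp_mem_faces _ hp₁ _ hq₁).imp
      (fun hle => ⟨hle, snd_le_snd_of_prodWeight_ne_zero hp hq (hle.lt_of_ne h)⟩)
      (fun hle => ⟨hle, snd_le_snd_of_prodWeight_ne_zero hq hp (hle.lt_of_ne' h)⟩)

theorem isWeight_prodWeight (z : K.Real × L.Real) : (K.prod L).IsWeight (prodWeight z) where
  nonneg _ := le_max_right _ _
  exists_ne_zero := by
    obtain ⟨v, hv, hv1⟩ := exists_mem_supp_lowerMass_add_apply_eq_one z.1
    obtain ⟨w, hw, hw1⟩ := exists_mem_supp_lowerMass_add_apply_eq_one z.2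
    refine ⟨(v, w), prodWeight_ne_zero_iff.mpr ⟨⟨hv, hw⟩, ?_, ?_⟩⟩
    · exact hw1 ▸ hv1 ▸ lt_add_of_pos_right _ (Real.apply_pos hv)
    · exact hv1 ▸ hw1 ▸ lt_add_of_pos_right _ (Real.apply_pos hw)
  mem_faces s hs hne := by
    refine ⟨hs, fun p hp q hq => le_total_of_prodWeight_ne_zero (hne p hp) (hne q hq),
      K.down_closed _ z.1.supp_mem_faces _ (Finset.image_subset_iff.mpr fun p hp => ?_)
        (hs.image _),
      L.down_closed _ z.2.supp_mem_faces _ (Finset.image_subset_iff.mpr fun p hp => ?_)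
        (hs.image _)⟩
    · exact (prodWeight_ne_zero_iff.mp (hne p hp)).1.1
    · exact (prodWeight_ne_zero_iff.mp (hne p hp)).1.2

/-- The comparison map `|K| × |L| → |K × L|` given by the staircase triangulation. -/
noncomputable def toProd (K L : GOSC G) : C(K.Real × L.Real, (K.prod L).Real) where
  toFun z := (isWeight_prodWeight z).normalize
  continuous_toFun := by
    refine IsWeight.continuous_normalize isWeight_prodWeight fun p => ?_
    have h₁ := (continuous_lowerMass p.1).comp (continuous_fst (X := K.Real) (Y := L.Real))
    have h₂ := (continuous_lowerMass p.2).comp (continuous_snd (X := K.Real) (Y := L.Real))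
    exact (((h₁.add ((Real.continuous_apply p.1).comp continuous_fst)).min
      (h₂.add ((Real.continuous_apply p.2).comp continuous_snd))).sub (h₁.max h₂)).max
      continuous_const

theorem isEquivariant_toProd : IsEquivariant G (toProd K L) := fun g z =>
  IsWeight.normalize_eq_smul (isWeight_prodWeight z) (isWeight_prodWeight _)
    (prodWeight_smul g z)

theorem mem_supp_of_mem_supp_toProd {z : K.Real × L.Real} {p : (K.prod L).V}
    (hp : p ∈ (toProd K L z).supp) : p.1 ∈ z.1.supp ∧ p.2 ∈ z.2.supp :=
  (prodWeight_ne_zero_iff.mp ((isWeight_prodWeight z).mem_supp_normalize.mp hp)).1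

end ToProduct

/-- A set of simplices that forms a `G`-invariant subcomplex. -/
structure IsInvariantSubcomplex (L : GOSC G) (Λ : Set (Finset L.V)) : Prop where
  subset_faces : Λ ⊆ L.faces
  down_closed : ∀ s ∈ Λ, ∀ t ⊆ s, t.Nonempty → t ∈ Λ
  smul_mem : ∀ g : G, ∀ s ∈ Λ, g • s ∈ Λ

section OpenStar

/-- The union of the open stars in `|sd L|` of the barycenters of the simplices in `Λ`: an open
neighbourhood of the subcomplex `|sd Λ|` that retracts onto it. -/
def openStar (Λ : Set (Finset L.V)) : Set (sd L).Real :=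
  {x | ∃ σ ∈ x.supp, carrier σ ∈ Λ}

variable {Λ : Set (Finset L.V)}

theorem isOpen_openStar (Λ : Set (Finset L.V)) : IsOpen (openStar Λ) := by
  have : openStar Λ = ⋃ σ, ⋃ _ : carrier σ ∈ Λ, {x : (sd L).Real | σ ∈ x.supp} := by
    ext x
    simp [openStar, and_comm]
  rw [this]
  exact isOpen_iUnion fun σ => isOpen_iUnion fun _ => Real.isOpen_mem_supp σ

theorem IsInvariantSubcomplex.smul_mem_openStar (hΛ : IsInvariantSubcomplex L Λ) (g : G)
    {x : (sd L).Real} (hx : x ∈ openStar Λ) : g • x ∈ openStar Λ :=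
  let ⟨σ, hσ, hσΛ⟩ := hx
  ⟨g • σ, (Real.mem_supp_smul g).mpr hσ, hΛ.smul_mem g _ hσΛ⟩

open Classical in
/-- Unnormalised barycentric coordinates in `L` of a point of `|sd L|`, after discarding the
barycenters of simplices outside `Λ` and pushing the others forward along the last-vertex map. -/
noncomputable def starWeight (Λ : Set (Finset L.V)) (x : (sd L).Real) (v : L.V) : ℝ :=
  ∑ σ with carrier σ ∈ Λ ∧ L.tau σ = v, x σ

theorem starWeight_ne_zero_iff {x : (sd L).Real} {v : L.V} :
    starWeight Λ x v ≠ 0 ↔ ∃ σ ∈ x.supp, carrier σ ∈ Λ ∧ L.tau σ = v := by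
  rw [starWeight, ne_eq, Finset.sum_eq_zero_iff_of_nonneg fun σ _ => x.apply_nonneg σ]
  simp only [Finset.mem_filter, Finset.mem_univ, true_and, not_forall, Real.mem_supp, exists_prop,
    and_comm, ne_eq]

theorem starWeight_smul (hΛ : IsInvariantSubcomplex L Λ) (g : G) (x : (sd L).Real) (v : L.V) :
    starWeight Λ (g • x) (g • v) = starWeight Λ x v := by
  have hmem : ∀ σ : (sd L).V, carrier (g • σ) ∈ Λ ↔ carrier σ ∈ Λ := fun σ =>
    ⟨fun h => by simpa only [carrier_smul, inv_smul_smul] using hΛ.smul_mem g⁻¹ _ h,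
      hΛ.smul_mem g _⟩
  classical
  rw [starWeight, starWeight, Finset.sum_filter, Finset.sum_filter,
    ← Equiv.sum_comp (MulAction.toPerm g)]
  simp only [MulAction.toPerm_apply, hmem, tau_smul, smul_left_cancel_iff, Real.smul_apply_smul]

theorem IsInvariantSubcomplex.mem_of_starWeight_ne_zero (hΛ : IsInvariantSubcomplex L Λ)
    {x : (sd L).Real} {s : Finset L.V} (hs : s.Nonempty) (hne : ∀ v ∈ s, starWeight Λ x v ≠ 0) :
    s ∈ Λ := by
  have := x.supp_nonempty.to_type
  choose! σ hσ hσΛ hτ using fun v hv => starWeight_ne_zero_iff.mp (hne v hv)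
  have hface : s.image σ ∈ (sd L).faces := (sd L).down_closed _ x.supp_mem_faces _
    (Finset.image_subset_iff.mpr hσ) (hs.image σ)
  obtain ⟨m, hm, hmax⟩ := (sd L).exists_greatest _ hface
  obtain ⟨w, hw, rfl⟩ := Finset.mem_image.mp hm
  refine hΛ.down_closed _ (hσΛ w hw) s (fun v hv => ?_) hs
  exact hτ v hv ▸ hmax (σ v) (Finset.mem_image_of_mem σ hv) (tau_mem (σ v))

theorem IsInvariantSubcomplex.isWeight_starWeight (hΛ : IsInvariantSubcomplex L Λ)
    {x : (sd L).Real} (hx : x ∈ openStar Λ) : L.IsWeight (starWeight Λ x) where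
  nonneg _ := Finset.sum_nonneg fun σ _ => x.apply_nonneg σ
  exists_ne_zero :=
    let ⟨σ, hσ, hσΛ⟩ := hx
    ⟨L.tau σ, starWeight_ne_zero_iff.mpr ⟨σ, hσ, hσΛ, rfl⟩⟩
  mem_faces _ hs hne := hΛ.subset_faces (hΛ.mem_of_starWeight_ne_zero hs hne)

/-- The last-vertex map on the open star of `Λ`, with values in `|Λ|`. -/
noncomputable def starRetract (hΛ : IsInvariantSubcomplex L Λ) (x : openStar Λ) : L.Real :=
  (hΛ.isWeight_starWeight x.2).normalize

theorem supp_starRetract_mem (hΛ : IsInvariantSubcomplex L Λ) (x : openStar Λ) :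
    (starRetract hΛ x).supp ∈ Λ :=
  hΛ.mem_of_starWeight_ne_zero (Real.supp_nonempty _) fun _ =>
    (hΛ.isWeight_starWeight x.2).mem_supp_normalize.mp

theorem exists_tau_eq_of_mem_supp_starRetract (hΛ : IsInvariantSubcomplex L Λ) {x : openStar Λ}
    {v : L.V} (hv : v ∈ (starRetract hΛ x).supp) : ∃ σ ∈ x.val.supp, L.tau σ = v :=
  (starWeight_ne_zero_iff.mp ((hΛ.isWeight_starWeight x.2).mem_supp_normalize.mp hv)).imp
    fun _ h => ⟨h.1, h.2.2⟩

theorem continuous_starRetract (hΛ : IsInvariantSubcomplex L Λ) : Continuous (starRetract hΛ) :=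
  IsWeight.continuous_normalize (fun x => hΛ.isWeight_starWeight x.2) fun _ =>
    continuous_finsetSum _ fun σ _ => (Real.continuous_apply σ).comp continuous_subtype_val

theorem starRetract_eq_smul (hΛ : IsInvariantSubcomplex L Λ) {g : G} {x y : openStar Λ}
    (hy : y.val = g • x.val) : starRetract hΛ y = g • starRetract hΛ x :=
  IsWeight.normalize_eq_smul _ _ fun v => hy ▸ starWeight_smul hΛ g x.val v

end OpenStar

/-- The comparison map `|K| × |K| → |sd^{b+1} (K × K)|`. -/
noncomputable def toSdProd (K : GOSC G) (b : ℕ) :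
    C(K.Real × K.Real, (sd (sdIter b (K.prod K))).Real) :=
  (toSd _).comp ((toSdIter b (K.prod K)).comp (toProd K K))

theorem isEquivariant_toSdProd (K : GOSC G) (b : ℕ) : IsEquivariant G (toSdProd K b) := fun g z =>
  calc toSdProd K b (g • z)
    _ = toSd _ (toSdIter b _ (g • toProd K K z)) := by rw [← isEquivariant_toProd]; rfl
    _ = toSd _ (g • toSdIter b _ (toProd K K z)) := by rw [isEquivariant_toSdIter]
    _ = g • toSdProd K b z := isEquivariant_toSd g _

theorem tauIter_tau_mem_supp_of_mem_supp_toSdProd {b : ℕ} {z : K.Real × K.Real}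
    {σ : (sd (sdIter b (K.prod K))).V} (hσ : σ ∈ (toSdProd K b z).supp) :
    (tauIter b (K.prod K) (tau _ σ)).1 ∈ z.1.supp ∧
      (tauIter b (K.prod K) (tau _ σ)).2 ∈ z.2.supp :=
  mem_supp_of_mem_supp_toProd <| tauIter_mem_supp_of_mem_supp_toSdIter b <|
    carrier_subset_supp_of_mem_supp_toSd hσ (tau_mem σ)

theorem eqNavigable_preimage_openStar {b c : ℕ} {Λ : Set (Finset (sdIter b (K.prod K)).V)}
    (hΛ : IsInvariantSubcomplex _ Λ)
    (hc : ContigOn _ K (fun v => (tauIter b (K.prod K) v).1)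
      (fun v => (tauIter b (K.prod K) v).2) Λ c) :
    EqNavigable G K.Real (toSdProd K b ⁻¹' openStar Λ) := by
  let S : SubMulAction G (K.Real × K.Real) :=
    ⟨toSdProd K b ⁻¹' openStar Λ, fun g z hz => by
      rw [Set.mem_preimage, isEquivariant_toSdProd]
      exact hΛ.smul_mem_openStar g hz⟩
  let r : C(S, (sdIter b (K.prod K)).Real) :=
    ⟨fun z => starRetract hΛ ⟨toSdProd K b z, z.2⟩, (continuous_starRetract hΛ).comp <|
      ((toSdProd K b).continuous.comp continuous_subtype_val).subtype_mk _⟩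
  have hsupp (z : S) (v) (hv : v ∈ (r z).supp) :
      (tauIter b (K.prod K) v).1 ∈ z.val.1.supp ∧ (tauIter b (K.prod K) v).2 ∈ z.val.2.supp := by
    obtain ⟨σ, hσ, rfl⟩ := exists_tau_eq_of_mem_supp_starRetract hΛ hv
    exact tauIter_tau_mem_supp_of_mem_supp_toSdProd hσ
  exact EqNavigable.of_equivariantlyHomotopic (S := S) G <|
    equivariantlyHomotopic_of_contigOn hc (r := r)
      (fun g z => starRetract_eq_smul hΛ (isEquivariant_toSdProd K b g z))
      (fun z => supp_starRetract_mem hΛ _) (fun _ _ => rfl) (fun _ _ => rfl)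
      (fun z v hv => (hsupp z v hv).1) (fun z v hv => (hsupp z v hv).2)

theorem eqTC_le_SCbc (K : GOSC G) (b c : ℕ) : eqTC G K.Real ≤ SCbc K b c := by
  refine le_sInf ?_
  rintro _ ⟨n, rfl, Λ, hfaces, hdown, hinv, hcover, hcontig⟩
  have hΛ (i) : IsInvariantSubcomplex _ (Λ i) := ⟨hfaces i, hdown i, hinv i⟩
  refine sInf_le ⟨n, rfl, fun i => toSdProd K b ⁻¹' openStar (Λ i),
    fun i => (isOpen_openStar (Λ i)).preimage (toSdProd K b).continuous, fun i g z hz => ?_,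
    Set.eq_univ_of_forall fun z => ?_, fun i => eqNavigable_preimage_openStar (hΛ i) (hcontig i)⟩
  · rw [Set.mem_preimage, isEquivariant_toSdProd]
    exact (hΛ i).smul_mem_openStar g hz
  · obtain ⟨σ, hσ⟩ := (toSdProd K b z).supp_nonempty
    obtain ⟨i, hi⟩ := Set.mem_iUnion.mp (hcover (carrier_mem_faces σ))
    exact Set.mem_iUnion.mpr ⟨i, σ, hσ, hi⟩

theorem eqTC_le_SCG (K : GOSC G) : eqTC G K.Real ≤ K.SCG :=
  le_iInf₂ (eqTC_le_SCbc K)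

/-! ### From motion planners to contiguity -/

section FineSubdivision

/-- The coordinates in `|L|` of a vertex of `sd^n L`, each vertex of a subdivision being placed at
the barycenter of its carrier. -/
noncomputable def vertexCoord (L : GOSC G) : (n : ℕ) → (sdIter n L).V → L.V → ℝ
  | 0, v => Pi.single v 1
  | n + 1, s => 𝔼 v ∈ carrier s, vertexCoord L n v

theorem exists_forall_vertexCoord_mem_simplexOn (n : ℕ) {s : Finset (sdIter n L).V}
    (hs : s ∈ (sdIter n L).faces) : ∃ t ∈ L.faces, ∀ v ∈ s, vertexCoord L n v ∈ simplexOn t := by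
  induction n with
  | zero =>
    refine ⟨s, hs, fun v hv => ⟨single_mem_stdSimplex ℝ v, fun w hw => ?_⟩⟩
    exact Pi.single_eq_of_ne (fun h : w = v => hw (h ▸ hv)) 1
  | succ n ih =>
    obtain ⟨σ, -, hσ⟩ := (sd (sdIter n L)).exists_greatest s hs
    obtain ⟨t, ht, hmem⟩ := ih (carrier_mem_faces σ)
    exact ⟨t, ht, fun τ hτ => expect_mem_of_convex (convex_simplexOn t)
      ((sdIter n L).nonempty_of_mem _ (carrier_mem_faces τ)) fun v hv => hmem v (hσ τ hτ hv)⟩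

/-- The point of `|L|` at which a vertex of `sd^n L` is placed. -/
noncomputable def vertexPoint (n : ℕ) (v : (sdIter n L).V) : L.Real :=
  Real.mk (vertexCoord L n v) <|
    let ⟨_, ht, hv⟩ := exists_forall_vertexCoord_mem_simplexOn n ((sdIter n L).singleton_mem v)
    simplexOn_subset_realSet ht (hv v (Finset.mem_singleton_self v))

theorem vertexPoint_succ_apply (n : ℕ) (s : (sdIter (n + 1) L).V) (w : L.V) :
    vertexPoint (n + 1) s w = 𝔼 v ∈ carrier s, vertexPoint n v w :=
  Finset.expect_apply _ _ w

theorem single_smul_apply_smul (g : G) (v w : L.V) :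
    (Pi.single (g • v) 1 : L.V → ℝ) (g • w) = (Pi.single v 1 : L.V → ℝ) w := by
  simp only [Pi.single_apply, smul_left_cancel_iff]

theorem vertexPoint_smul (n : ℕ) (g : G) (v : (sdIter n L).V) :
    vertexPoint n (g • v) = g • vertexPoint n v := by
  refine Real.eq_smul_of_apply_smul fun w => ?_
  induction n with
  | zero => exact single_smul_apply_smul g v w
  | succ n ih =>
    refine (vertexPoint_succ_apply n (g • v) (g • w)).trans ?_
    rw [vertexPoint_succ_apply]
    exact (Finset.expect_image (MulAction.injective g).injOn).trans
      (Finset.expect_congr rfl fun u _ => ih u)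

theorem supp_vertexPoint_subset {n : ℕ} {s : (sd (sdIter n L)).V} {v : (sdIter n L).V}
    (hv : v ∈ carrier s) :
    (vertexPoint n v).supp ⊆ (vertexPoint (n + 1) s : L.Real).supp := fun w hw => by
  refine Real.mem_supp.mpr ((vertexPoint_succ_apply n s w).trans_ne ?_)
  rw [ne_eq, Finset.expect_eq_zero_iff_of_nonneg fun u _ => Real.apply_nonneg _ w]
  exact fun h => Real.mem_supp.mp hw (h v hv)

theorem tauIter_mem_supp_vertexPoint (n : ℕ) (v : (sdIter n L).V) :
    tauIter n L v ∈ (vertexPoint n v).supp := by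
  induction n with
  | zero =>
    have : (Pi.single (v : L.V) 1 : L.V → ℝ) v = 1 := Pi.single_eq_same _ _
    exact Real.mem_supp.mpr (this.trans_ne one_ne_zero)
  | succ n ih => exact supp_vertexPoint_subset (tau_mem v) (ih _)

theorem card_le_of_forall_card_le {N : ℕ} (hN : ∀ s ∈ L.faces, s.card ≤ N) {σ : Finset (sd L).V}
    (hσ : σ ∈ (sd L).faces) : σ.card ≤ N := by
  have hinj : Set.InjOn (fun s => (carrier s).card) (σ : Set (sd L).V) := by
    intro s hs t ht hst
    refine carrier_injective ?_
    rcases (sd L).face_chain σ hσ s hs t ht with h | h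
    · exact Finset.eq_of_subset_of_card_le h hst.ge
    · exact (Finset.eq_of_subset_of_card_le h hst.le).symm
  calc σ.card ≤ (Finset.Icc 1 N).card := Finset.card_le_card_of_injOn _ (fun s _ =>
        Finset.mem_coe.mpr <| Finset.mem_Icc.mpr ⟨Finset.card_pos.mpr <|
          L.nonempty_of_mem _ (carrier_mem_faces s), hN _ (carrier_mem_faces s)⟩) hinj
    _ = N := by simp

theorem card_le_of_mem_faces_sdIter (n : ℕ) {s : Finset (sdIter n L).V}
    (hs : s ∈ (sdIter n L).faces) : s.card ≤ Fintype.card L.V := by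
  induction n with
  | zero => exact Finset.card_le_univ s
  | succ n ih => exact card_le_of_forall_card_le (fun _ => ih) hs

/-- A bound for the factor by which barycentric subdivision shrinks the simplices of `L`, with the
number of vertices in place of the dimension. -/
noncomputable def meshRatio (L : GOSC G) : ℝ := Fintype.card L.V / (Fintype.card L.V + 1)

theorem dist_vertexPoint_succ_le {n : ℕ} {d : ℝ}
    (hd : ∀ s ∈ (sdIter n L).faces, ∀ u ∈ s, ∀ v ∈ s,
      dist (vertexPoint n u : L.Real) (vertexPoint n v) ≤ d)
    {s t : (sd (sdIter n L)).V} (hst : carrier s ⊆ carrier t) :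
    dist (vertexPoint (n + 1) s : L.Real) (vertexPoint (n + 1) t) ≤ L.meshRatio * d := by
  refine expect_mem_of_convex (convex_closedBall (vertexCoord L (n + 1) t) (L.meshRatio * d))
    ((sdIter n L).nonempty_of_mem _ (carrier_mem_faces s)) fun v hv => ?_
  refine dist_expect_le (hst hv) ?_ fun u hu => hd _ (carrier_mem_faces t) v (hst hv) u hu
  exact (card_le_of_mem_faces_sdIter n (carrier_mem_faces t)).trans (Nat.le_succ _)

theorem Real.dist_le_one (x y : L.Real) : dist x y ≤ 1 := by
  refine (dist_coe x y).symm.trans_le ((dist_pi_le_iff zero_le_one).mpr fun v => ?_)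
  exact _root_.Real.dist_le_of_mem_Icc_01 (mem_Icc_of_mem_stdSimplex x.coe_mem_stdSimplex v)
    (mem_Icc_of_mem_stdSimplex y.coe_mem_stdSimplex v)

theorem dist_vertexPoint_le (n : ℕ) {s : Finset (sdIter n L).V} (hs : s ∈ (sdIter n L).faces)
    {u v : (sdIter n L).V} (hu : u ∈ s) (hv : v ∈ s) :
    dist (vertexPoint n u : L.Real) (vertexPoint n v) ≤ L.meshRatio ^ n := by
  induction n with
  | zero => exact (Real.dist_le_one _ _).trans_eq (pow_zero _).symm
  | succ n ih =>
    have hle {σ τ : (sd (sdIter n L)).V} (h : carrier σ ⊆ carrier τ) :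
        dist (vertexPoint (n + 1) σ : L.Real) (vertexPoint (n + 1) τ) ≤ L.meshRatio ^ (n + 1) :=
      (dist_vertexPoint_succ_le (fun _ hs _ hu _ hv => ih hs hu hv) h).trans_eq (pow_succ' _ n).symm
    rcases (sd (sdIter n L)).face_chain s hs u hu v hv with h | h
    · exact hle h
    · exact (dist_comm _ _).trans_le (hle h)

theorem tendsto_meshRatio_pow (L : GOSC G) :
    Filter.Tendsto (fun n => L.meshRatio ^ n) Filter.atTop (nhds 0) := by
  refine tendsto_pow_atTop_nhds_zero_of_lt_one (by unfold meshRatio; positivity) ?_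
  exact (div_lt_one (by positivity)).mpr (lt_add_one _)

theorem exists_forall_dist_vertexPoint_lt (L : GOSC G) {ε : ℝ} (hε : 0 < ε) :
    ∃ n, ∀ s t : (sd (sdIter n L)).V, carrier s ⊆ carrier t →
      dist (vertexPoint (n + 1) s : L.Real) (vertexPoint (n + 1) t) < ε := by
  obtain ⟨n, hn⟩ := (((Filter.tendsto_add_atTop_iff_nat 1).mpr L.tendsto_meshRatio_pow).eventually
    (gt_mem_nhds hε)).exists
  refine ⟨n, fun s t hst => (dist_vertexPoint_succ_le (fun s hs u hu v hv => ?_) hst).trans_lt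
    ((pow_succ' _ n).symm.trans_lt hn)⟩
  exact dist_vertexPoint_le n hs hu hv

end FineSubdivision

section OfProduct

theorem image_fst_supp_mem_faces (x : (K.prod L).Real) : x.supp.image Prod.fst ∈ K.faces :=
  x.supp_mem_faces.2.2.1

theorem image_snd_supp_mem_faces (x : (K.prod L).Real) : x.supp.image Prod.snd ∈ L.faces :=
  x.supp_mem_faces.2.2.2

/-- The map `|K × L| → |K| × |L|` whose components are induced by the projections. -/
noncomputable def ofProd (K L : GOSC G) : C((K.prod L).Real, K.Real × L.Real) where
  toFun x := (x.map _ (image_fst_supp_mem_faces x), x.map _ (image_snd_supp_mem_faces x))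
  continuous_toFun :=
    (Real.continuous_map continuous_id image_fst_supp_mem_faces).prodMk
      (Real.continuous_map continuous_id image_snd_supp_mem_faces)

theorem isEquivariant_ofProd : IsEquivariant G (ofProd K L) := fun _ _ =>
  Prod.ext
    (Real.map_eq_smul rfl (image_fst_supp_mem_faces _) (image_fst_supp_mem_faces _) fun _ _ => rfl)
    (Real.map_eq_smul rfl (image_snd_supp_mem_faces _) (image_snd_supp_mem_faces _) fun _ _ => rfl)

theorem fst_mem_supp_ofProd {x : (K.prod L).Real} {p : (K.prod L).V} (hp : p ∈ x.supp) :
    p.1 ∈ (ofProd K L x).1.supp :=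
  Real.supp_map _ x (image_fst_supp_mem_faces x) ▸ Finset.mem_image_of_mem Prod.fst hp

theorem snd_mem_supp_ofProd {x : (K.prod L).Real} {p : (K.prod L).V} (hp : p ∈ x.supp) :
    p.2 ∈ (ofProd K L x).2.supp :=
  Real.supp_map _ x (image_snd_supp_mem_faces x) ▸ Finset.mem_image_of_mem Prod.snd hp

/-- The point of `|K| × |K|` at which the barycenter of a simplex of `sd^n (K × K)` is placed. -/
noncomputable def barycenterPair {n : ℕ} (s : (sd (sdIter n (K.prod K))).V) : K.Real × K.Real :=
  ofProd K K (vertexPoint (n + 1) s)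

theorem isEquivariant_barycenterPair {n : ℕ} :
    IsEquivariant G (barycenterPair (K := K) (n := n)) := fun g s =>
  (congrArg _ (vertexPoint_smul (n + 1) g s)).trans (isEquivariant_ofProd g _)

theorem tauIter_mem_supp_barycenterPair {n : ℕ} {s : (sd (sdIter n (K.prod K))).V}
    {v : (sdIter n (K.prod K)).V} (hv : v ∈ carrier s) :
    (tauIter n (K.prod K) v).1 ∈ (barycenterPair s).1.supp ∧
      (tauIter n (K.prod K) v).2 ∈ (barycenterPair s).2.supp :=
  have h := supp_vertexPoint_subset hv (tauIter_mem_supp_vertexPoint n v)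
  ⟨fst_mem_supp_ofProd h, snd_mem_supp_ofProd h⟩

theorem exists_forall_dist_barycenterPair_lt (K : GOSC G) {ε : ℝ} (hε : 0 < ε) :
    ∃ n, ∀ s t : (sd (sdIter n (K.prod K))).V, carrier s ⊆ carrier t →
      dist (barycenterPair s) (barycenterPair t) < ε := by
  obtain ⟨δ, hδ, h⟩ := Metric.uniformContinuous_iff.mp
    (CompactSpace.uniformContinuous_of_continuous (ofProd K K).continuous) ε hε
  obtain ⟨n, hn⟩ := exists_forall_dist_vertexPoint_lt (K.prod K) hδ
  exact ⟨n, fun s t hst => h (hn s t hst)⟩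

end OfProduct

theorem Real.smul_eq_of_mem_supp {g : G} {x : K.Real} (hg : g • x = x) {v : K.V}
    (hv : v ∈ x.supp) : g • v = v := by
  have hgv : g • v ∈ x.supp := hg ▸ (Real.mem_supp_smul g).mpr hv
  rcases K.face_chain _ x.supp_mem_faces v hv (g • v) hgv with h | h
  · exact smul_eq_of_le_smul h
  · have : v ≤ g⁻¹ • v := (smul_le_smul_iff g).mp (by rwa [smul_inv_smul])
    exact (eq_inv_smul_iff.mp (smul_eq_of_le_smul this).symm)

/-- `φ` approximates on `Λ` the assignment `h` of a point of `|K|` to each simplex of `M`, in the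
sense of simplicial approximation. -/
def ApproximatesOn (φ : M.V → K.V) (h : (sd M).V → K.Real) (Λ : Set (Finset M.V)) : Prop :=
  ∀ s : (sd M).V, carrier s ∈ Λ → ∀ v ∈ carrier s, φ v ∈ (h s).supp

variable {Λ : Set (Finset M.V)}

theorem ApproximatesOn.image_union_image_mem_faces {φ ψ : M.V → K.V} {h : (sd M).V → K.Real}
    (hφ : ApproximatesOn φ h Λ) (hψ : ApproximatesOn ψ h Λ) (hΛ : Λ ⊆ M.faces) {s : Finset M.V}
    (hs : s ∈ Λ) : s.image φ ∪ s.image ψ ∈ K.faces := by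
  have hsub {χ : M.V → K.V} (hχ : ApproximatesOn χ h Λ) : s.image χ ⊆ (h ⟨s, hΛ hs⟩).supp :=
    Finset.image_subset_iff.mpr fun v hv => hχ ⟨s, hΛ hs⟩ hs v hv
  exact K.down_closed _ (Real.supp_mem_faces _) _ (Finset.union_subset (hsub hφ) (hsub hψ))
    (((M.nonempty_of_mem s (hΛ hs)).image φ).mono Finset.subset_union_left)

theorem contigOn_of_forall_approximatesOn (hΛ : Λ ⊆ M.faces) {c : ℕ}
    {φ : Fin (c + 2) → M.V → K.V} (hφ : ∀ j, IsEquivariant G (φ j))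
    {h : Fin (c + 1) → (sd M).V → K.Real}
    (hcast : ∀ j : Fin (c + 1), ApproximatesOn (φ j.castSucc) (h j) Λ)
    (hsucc : ∀ j : Fin (c + 1), ApproximatesOn (φ j.succ) (h j) Λ) :
    ContigOn M K (φ 0) (φ (Fin.last (c + 1))) Λ (c + 1) := by
  refine ⟨φ, fun _ _ _ _ => rfl, fun _ _ _ _ => rfl, fun j s hs => ?_, fun j g _ _ v _ => hφ j g v,
    fun j s hs => (hcast j).image_union_image_mem_faces (hsucc j) hΛ hs⟩
  rw [← Finset.union_self (s.image (φ j))]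
  cases j using Fin.lastCases with
  | last => exact (hsucc (Fin.last c)).image_union_image_mem_faces (hsucc _) hΛ hs
  | cast j => exact (hcast j).image_union_image_mem_faces (hcast j) hΛ hs

theorem exists_isEquivariant_approximatesOn (hΛ : IsInvariantSubcomplex M Λ) {p : M.V → K.V}
    (hp : IsEquivariant G p) {h₀ h₁ : (sd M).V → K.Real} (h₀_smul : IsEquivariant G h₀)
    (h₁_smul : IsEquivariant G h₁)
    (hex : ∀ v, {v} ∈ Λ → ∃ w, ∀ s : (sd M).V, carrier s ∈ Λ → v ∈ carrier s →
      w ∈ (h₀ s).supp ∧ w ∈ (h₁ s).supp) :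
    ∃ φ : M.V → K.V, IsEquivariant G φ ∧ ApproximatesOn φ h₀ Λ ∧ ApproximatesOn φ h₁ Λ := by
  let R (v : M.V) (w : K.V) : Prop := ∀ s : (sd M).V, carrier s ∈ Λ → v ∈ carrier s →
    w ∈ (h₀ s).supp ∧ w ∈ (h₁ s).supp
  have hR (g : G) (v : M.V) (w : K.V) (hvw : R v w) : R (g • v) (g • w) := fun s hs hv => by
    have hs' : carrier (g⁻¹ • s) ∈ Λ := hΛ.smul_mem g⁻¹ _ hs
    have translate {h : (sd M).V → K.Real} (hh : IsEquivariant G h) (hw : w ∈ (h (g⁻¹ • s)).supp) :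
        g • w ∈ (h s).supp := by
      rwa [← Real.mem_supp_smul g⁻¹, inv_smul_smul, ← hh]
    exact (hvw (g⁻¹ • s) hs' (Finset.mem_inv_smul_finset_iff.mpr hv)).imp (translate h₀_smul)
      (translate h₁_smul)
  have hchoice (v : M.V) : ∃ w, R v w ∧ MulAction.stabilizer G v ≤ MulAction.stabilizer G w := by
    by_cases hv : {v} ∈ Λ
    · obtain ⟨w, hw⟩ := hex v hv
      let b : (sd M).V := ⟨{v}, hΛ.subset_faces hv⟩
      refine ⟨w, hw, fun g hg => Real.smul_eq_of_mem_supp (?_ : g • h₀ b = h₀ b)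
        (hw b hv (Finset.mem_singleton_self v)).1⟩
      have hgb : g • b = b := carrier_injective <|
        (Finset.smul_finset_singleton v).trans (congrArg _ hg)
      rw [← h₀_smul, hgb]
    · refine ⟨p v, fun s hs hvs => (hv ?_).elim, fun g hg => (hp g v).symm.trans (congrArg p hg)⟩
      exact hΛ.down_closed _ hs _ (Finset.singleton_subset_iff.mpr hvs)
        (Finset.singleton_nonempty v)
  obtain ⟨φ, hφ, hφR⟩ := exists_isEquivariant_of_stabilizer_le hR hchoice
  exact ⟨φ, hφ, fun s hs v hv => (hφR v s hs hv).1, fun s hs v hv => (hφR v s hs hv).2⟩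

theorem contigOn_of_exists_mem_supp (hΛ : IsInvariantSubcomplex M Λ) {p₁ p₂ : M.V → K.V}
    (hp₁ : IsEquivariant G p₁) (hp₂ : IsEquivariant G p₂) {c : ℕ}
    {h : Fin (c + 1) → (sd M).V → K.Real} (hh : ∀ k, IsEquivariant G (h k))
    (hfirst : ApproximatesOn p₁ (h 0) Λ) (hlast : ApproximatesOn p₂ (h (Fin.last c)) Λ)
    (hex : ∀ (k : Fin c) (v : M.V), {v} ∈ Λ → ∃ w, ∀ s : (sd M).V, carrier s ∈ Λ →
      v ∈ carrier s → w ∈ (h k.castSucc s).supp ∧ w ∈ (h k.succ s).supp) :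
    ContigOn M K p₁ p₂ Λ (c + 1) := by
  choose ψ hψ hψ_cast hψ_succ using fun k : Fin c =>
    exists_isEquivariant_approximatesOn hΛ hp₁ (hh k.castSucc) (hh k.succ) (hex k)
  let φ : Fin (c + 2) → M.V → K.V := Fin.cons p₁ (Fin.snoc (α := fun _ => M.V → K.V) ψ p₂)
  have hφ_castSucc (j : Fin (c + 1)) : ApproximatesOn (φ j.castSucc) (h j) Λ := by
    cases j using Fin.cases with
    | zero => exact hfirst
    | succ k => simpa only [φ, Fin.castSucc_succ, Fin.cons_succ, Fin.snoc_castSucc] using hψ_succ k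
  have hφ_succ (j : Fin (c + 1)) : ApproximatesOn (φ j.succ) (h j) Λ := by
    cases j using Fin.lastCases with
    | last => simpa only [φ, Fin.cons_succ, Fin.snoc_last] using hlast
    | cast k => simpa only [φ, Fin.cons_succ, Fin.snoc_castSucc] using hψ_cast k
  have hφ (j : Fin (c + 2)) : IsEquivariant G (φ j) := by
    refine Fin.cases hp₁ (Fin.lastCases ?_ fun k => ?_) j
    · simpa only [φ, Fin.cons_succ, Fin.snoc_last] using hp₂
    · simpa only [φ, Fin.cons_succ, Fin.snoc_castSucc] using hψ k
  simpa only [φ, Fin.cons_zero, ← Fin.succ_last, Fin.cons_succ, Fin.snoc_last] using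
    contigOn_of_forall_approximatesOn hΛ.subset_faces hφ hφ_castSucc hφ_succ

theorem eventually_exists_forall_mem_supp {Z : Type*} [PseudoMetricSpace Z] {C : Set Z}
    (hC : IsCompact C) {F : Z → K.Real} (hF : ContinuousOn F C) :
    ∀ᶠ ε in 𝓝[>] (0 : ℝ), ∀ z ∈ C, ∃ w, ∀ z' ∈ C, dist z' z < ε → w ∈ (F z').supp := by
  have : CompactSpace C := isCompact_iff_compactSpace.mp hC
  obtain ⟨δ, hδ, h⟩ := lebesgue_number_lemma_of_metric (isCompact_univ (X := C))
    (fun w => (Real.isOpen_mem_supp w).preimage hF.domRestrict)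
    fun z _ => Set.mem_iUnion.mpr (C.domRestrict F z).supp_nonempty
  filter_upwards [Ioo_mem_nhdsGT hδ] with ε hε z hz
  obtain ⟨w, hw⟩ := h ⟨z, hz⟩ trivial
  exact ⟨w, fun z' hz' hdist => @hw ⟨z', hz'⟩ (hdist.trans hε.2)⟩

/-- The simplices of `M` all of whose faces have their barycenter placed in `C` by `x`. -/
def subcomplexOver {Z : Type*} (x : (sd M).V → Z) (C : Set Z) : Set (Finset M.V) :=
  {s | s ∈ M.faces ∧ ∀ t : (sd M).V, carrier t ⊆ s → x t ∈ C}

section SubcomplexOver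

variable {Z : Type*} {x : (sd M).V → Z} {C : Set Z}

theorem mem_of_carrier_mem_subcomplexOver {s : (sd M).V} (hs : carrier s ∈ subcomplexOver x C) :
    x s ∈ C :=
  hs.2 s subset_rfl

variable [MulAction G Z]

theorem isInvariantSubcomplex_subcomplexOver (hx : IsEquivariant G x) (hC : GInvariant G C) :
    IsInvariantSubcomplex M (subcomplexOver x C) where
  subset_faces _ hs := hs.1
  down_closed _ hs t hts ht :=
    ⟨M.down_closed _ hs.1 t hts ht, fun r hr => hs.2 r (hr.trans hts)⟩
  smul_mem g s hs := by
    refine ⟨smul_mem_faces g hs.1, fun t ht => ?_⟩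
    have : x (g⁻¹ • t) ∈ C := hs.2 _ (Finset.subset_smul_finset_iff.mp ht)
    simpa only [hx g⁻¹ t, smul_inv_smul] using hC g _ this

theorem contigOn_subcomplexOver [PseudoMetricSpace Z] (hx : IsEquivariant G x)
    (hC : GInvariant G C) {H : Z × unitInterval → K.Real}
    (hH : ∀ t, IsEquivariant G fun z => H (z, t)) {p₁ p₂ : M.V → K.V}
    (hp₁ : IsEquivariant G p₁) (hp₂ : IsEquivariant G p₂)
    {ε : ℝ} (hmesh : ∀ s t : (sd M).V, carrier s ⊆ carrier t → dist (x s) (x t) < ε)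
    (hsupp : ∀ p ∈ C ×ˢ Set.univ, ∃ w, ∀ p' ∈ C ×ˢ Set.univ, dist p' p < ε → w ∈ (H p').supp)
    {c : ℕ} {τ : Fin (c + 1) → unitInterval}
    (hτ : ∀ k : Fin c, dist (τ k.succ) (τ k.castSucc) < ε)
    (hfirst : ApproximatesOn p₁ (fun s => H (x s, τ 0)) (subcomplexOver x C))
    (hlast : ApproximatesOn p₂ (fun s => H (x s, τ (Fin.last c))) (subcomplexOver x C)) :
    ContigOn M K p₁ p₂ (subcomplexOver x C) (c + 1) := by
  have hmotion (k : Fin (c + 1)) : IsEquivariant G fun s => H (x s, τ k) := fun g s =>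
    (congrArg (fun z => H (z, τ k)) (hx g s)).trans (hH (τ k) g (x s))
  refine contigOn_of_exists_mem_supp (isInvariantSubcomplex_subcomplexOver hx hC) hp₁ hp₂ hmotion
    hfirst hlast fun k v hv => ?_
  let b : (sd M).V := ⟨{v}, hv.1⟩
  have hb : x b ∈ C := mem_of_carrier_mem_subcomplexOver (s := b) hv
  obtain ⟨w, hw⟩ := hsupp (x b, τ k.castSucc) ⟨hb, trivial⟩
  refine ⟨w, fun s hs hvs => ?_⟩
  have hdist : dist (x s) (x b) < ε :=
    (dist_comm _ _).trans_lt (hmesh b s (Finset.singleton_subset_iff.mpr hvs))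
  have hxs : x s ∈ C := mem_of_carrier_mem_subcomplexOver hs
  have hε : 0 < ε := dist_nonneg.trans_lt hdist
  exact ⟨hw (x s, τ k.castSucc) ⟨hxs, trivial⟩ (max_lt hdist ((dist_self _).trans_lt hε)),
    hw (x s, τ k.succ) ⟨hxs, trivial⟩ (max_lt hdist (hτ k))⟩

end SubcomplexOver

theorem SCG_le_of_cover {n c N : ℕ} {Λ : Fin N → Set (Finset (sdIter n (K.prod K)).V)}
    (hΛ : ∀ i, IsInvariantSubcomplex _ (Λ i)) (hcover : (sdIter n (K.prod K)).faces ⊆ ⋃ i, Λ i)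
    (hcontig : ∀ i, ContigOn (sdIter n (K.prod K)) K (fun v => (tauIter n (K.prod K) v).1)
      (fun v => (tauIter n (K.prod K) v).2) (Λ i) c) :
    K.SCG ≤ N :=
  (iInf₂_le n c).trans <| sInf_le ⟨N, rfl, Λ, fun i => (hΛ i).subset_faces,
    fun i => (hΛ i).down_closed, fun i => (hΛ i).smul_mem, hcover, hcontig⟩

theorem SCG_le_eqTC (K : GOSC G) : K.SCG ≤ eqTC G K.Real := by
  refine le_sInf ?_
  rintro _ ⟨N, rfl, U, hU_open, hU_inv, hU_cover, hU_nav⟩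
  choose H hH_cont hH₀ hH₁ hH_smul using fun i => (hU_nav i).exists_motion (hU_inv i)
  obtain ⟨C, hC_closed, hC_inv, hCU, δ, hδ, hδC⟩ :=
    exists_closed_invariant_shrinking hU_open hU_inv hU_cover
  have hsmall (i : Fin N) := eventually_exists_forall_mem_supp
    ((hC_closed i).isCompact.prod isCompact_univ)
    ((hH_cont i).mono (Set.prod_mono_left (hCU i)))
  obtain ⟨ε, hε, hε₀, hεδ⟩ :=
    ((Filter.eventually_all.mpr hsmall).and (Ioo_mem_nhdsGT hδ)).exists
  obtain ⟨n, hn⟩ := exists_forall_dist_barycenterPair_lt K hε₀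
  obtain ⟨c, τ, hτ₀, hτ₁, hτ⟩ := exists_unitInterval_partition hε₀
  refine SCG_le_of_cover
    (fun i => isInvariantSubcomplex_subcomplexOver isEquivariant_barycenterPair (hC_inv i))
    (fun s hs => ?_)
    fun i => contigOn_subcomplexOver isEquivariant_barycenterPair (hC_inv i) (hH_smul i)
      (fun g v => congrArg Prod.fst (tauIter_smul n g v))
      (fun g v => congrArg Prod.snd (tauIter_smul n g v)) hn (hε i) hτ
      (fun s hs v hv => ?_) (fun s hs v hv => ?_)
  · obtain ⟨i, hi⟩ := hδC (barycenterPair ⟨s, hs⟩)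
    exact Set.mem_iUnion.mpr ⟨i, hs, fun t hts => hi ((hn t ⟨s, hs⟩ hts).trans hεδ)⟩
  · have hstart : H i (barycenterPair s, τ 0) = (barycenterPair s).1 :=
      hτ₀ ▸ hH₀ i _ (hCU i (mem_of_carrier_mem_subcomplexOver hs))
    exact (congrArg Real.supp hstart).symm ▸ (tauIter_mem_supp_barycenterPair hv).1
  · have hend : H i (barycenterPair s, τ (Fin.last c)) = (barycenterPair s).2 :=
      hτ₁ ▸ hH₁ i _ (hCU i (mem_of_carrier_mem_subcomplexOver hs))
    exact (congrArg Real.supp hend).symm ▸ (tauIter_mem_supp_barycenterPair hv).2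

end GOSC

theorem eqTC_real_eq_SCG_general (G : Type) [Group G] (K : GOSC G) : eqTC G K.Real = K.SCG :=
  le_antisymm (GOSC.eqTC_le_SCG K) (GOSC.SCG_le_eqTC K)

/-- Let `G` be a finite group and `K` an ordered `G`-simplicial complex.
Then the equivariant topological complexity of the geometric realization `|K|` equals the
equivariant simplicial complexity of `K`: `TC_G(|K|) = SC_G(K)`. -/
theorem eqTC_real_eq_SCG (G : Type) [Group G] [Finite G] (K : GOSC G) :
    eqTC G K.Real = K.SCG :=
  eqTC_real_eq_SCG_general G K
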